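/- arXiv:1912.03166 — 9 statements merged into one kernel-verified Lean document; each statement's English description precedes it below -/
import Mathlib

section
/- Let C = {x ∈ ℝⁿ : Ax − b ∈ K}, where A ∈ ℝ^{m×n} has full column rank and K ⊆ ℝ^m is a proper cone, and let F = {(α, β) ∈ ℝⁿ × ℝ : ∃ u ∈ K* with α = Aᵀu and β ≤ bᵀu}. If C is nonempty, then C° = cl F, i.e., every valid inequality (α, β) for C is the limit of pairs (α_ε, β_ε) obtained by Farkas aggregation: α_ε = Aᵀu_ε, β_ε ≤ bᵀu_ε for some u_ε ∈ K*. -/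
open Matrix

/-- A proper cone: closed, convex, closed under nonnegative scaling,
pointed (`K ∩ (−K) = {0}`), with nonempty interior. -/
def IsProperCone {n : ℕ} (K : Set (Fin n → ℝ)) : Prop :=
  IsClosed K ∧ Convex ℝ K ∧ (∀ x ∈ K, ∀ t : ℝ, 0 ≤ t → t • x ∈ K) ∧
    K ∩ (-K) = {0} ∧ (interior K).Nonempty

/-- The dual cone `K* = {u : uᵀx ≥ 0 for all x ∈ K}`. -/
def dualCone' {n : ℕ} (K : Set (Fin n → ℝ)) : Set (Fin n → ℝ) :=
  {u | ∀ x ∈ K, 0 ≤ u ⬝ᵥ x}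

/-!
Let `Ĉ = {(x, s) : s ≥ 0, Ax - sb ∈ K}` be the homogenization of `C`, and pair `(x, s)` with
`(α, β)` by the slack `αᵀx - sβ`. The bipolar theorem for `K` says that the dual cone of `F` is `Ĉ`,
so the bipolar theorem for `F` says that `cl F` is the dual cone of `Ĉ`. Since `C` is nonempty, this
is also the dual cone of the slice `C × {1}`: a point of `Ĉ` at height `0` is a limit of points of
`Ĉ` at positive height. The dual cone of `C × {1}` is `C°`.
-/

open PointedCone (dual)

section Slice

variable {R M N : Type*} [Field R] [LinearOrder R] [IsStrictOrderedRing R]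
  [AddCommGroup M] [Module R M] [AddCommGroup N] [Module R N]

theorem dual_slice_eq_dual (P : M →ₗ[R] N →ₗ[R] R) (D : PointedCone R M) (h : M →ₗ[R] R)
    (hD : ∀ y ∈ D, 0 ≤ h y) (hne : ∃ y ∈ D, h y = 1) :
    dual P {y | y ∈ D ∧ h y = 1} = dual P (D : Set M) := by
  refine le_antisymm (fun z hz y hy ↦ ?_) (PointedCone.dual_anti fun y hy ↦ hy.1)
  have nonneg_of_pos : ∀ y ∈ D, 0 < h y → 0 ≤ P y z := by
    intro y hy hpos
    have hscaled : 0 ≤ P ((h y)⁻¹ • y) z :=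
      hz ⟨D.smul_mem (inv_nonneg.2 hpos.le) hy, by simp [hpos.ne']⟩
    rw [map_smul, LinearMap.smul_apply, smul_eq_mul] at hscaled
    exact nonneg_of_mul_nonneg_right hscaled (inv_pos.2 hpos)
  obtain ⟨y₁, hy₁, hone⟩ := hne
  have nonneg_along_ray : ∀ t, 0 ≤ t → 0 ≤ t * P y z + P y₁ z := by
    intro t ht
    have hmem : t • y + y₁ ∈ D := D.add_mem (D.smul_mem ht hy) hy₁
    have hpos : 0 < h (t • y + y₁) := by
      simpa [hone] using add_pos_of_nonneg_of_pos (mul_nonneg ht (hD y hy)) one_pos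
    simpa using nonneg_of_pos _ hmem hpos
  have hy₁z : 0 ≤ P y₁ z := nonneg_of_pos y₁ hy₁ (hone ▸ one_pos)
  by_contra! hneg
  have hfar := nonneg_along_ray (-(P y₁ z + 1) / P y z)
    (div_nonneg_of_nonpos (by linarith) hneg.le)
  rw [div_mul_cancel₀ _ hneg.ne] at hfar
  linarith

end Slice

section Bipolar

variable {M N : Type*} [AddCommGroup M] [Module ℝ M] [TopologicalSpace M]
  [AddCommGroup N] [Module ℝ N] [TopologicalSpace N]

theorem exists_properCone_coe_eq {K : Set N} (hne : K.Nonempty) (hclosed : IsClosed K)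
    (hconv : Convex ℝ K) (hsmul : ∀ x ∈ K, ∀ t : ℝ, 0 ≤ t → t • x ∈ K) :
    ∃ C : ProperCone ℝ N, (C : Set N) = K := by
  have conic_comb : ∀ x ∈ K, ∀ y ∈ K, ∀ a : ℝ, 0 ≤ a → ∀ b : ℝ, 0 ≤ b → a • x + b • y ∈ K := by
    intro x hx y hy a ha b hb
    have hmid := hconv.midpoint_mem (hsmul x hx a ha) (hsmul y hy b hb)
    simpa [two_smul] using hsmul _ hmid 2 zero_le_two
  exact ⟨⟨PointedCone.ofConeComb K hne conic_comb, hclosed⟩, rfl⟩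

theorem dual_flip_dual_eq_closure [IsTopologicalAddGroup N] [ContinuousSMul ℝ N]
    [LocallyConvexSpace ℝ N] (P : M →ₗ[ℝ] N →ₗ[ℝ] ℝ) [P.IsContPerfPair] (D : PointedCone ℝ N) :
    (dual P (dual P.flip (D : Set N) : Set M) : Set N) = closure D := by
  have dual_closure : dual P.flip (closure D : Set N) = dual P.flip (D : Set N) :=
    le_antisymm (PointedCone.dual_anti subset_closure) fun x hx ↦
      closure_minimal hx (isClosed_Ici.preimage P.continuous_of_isContPerfPair)
  have bipolar := congrArg (SetLike.coe : ProperCone ℝ N → Set N)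
    (ProperCone.dual_dual_flip P (Submodule.closure D))
  rw [← dual_closure]
  exact bipolar

end Bipolar

section Farkas

variable {E E' G G' : Type*} [AddCommGroup E] [Module ℝ E] [AddCommGroup E'] [Module ℝ E']
  [AddCommGroup G] [Module ℝ G] [AddCommGroup G'] [Module ℝ G']

/-- The slack `⟨x, α⟩ - s β` of the homogenized inequality `⟨x, α⟩ ≥ s β`, as a bilinear pairing of
`(x, s)` with `(α, β)`. -/
def slackPairing (p : E →ₗ[ℝ] E' →ₗ[ℝ] ℝ) : E × ℝ →ₗ[ℝ] E' × ℝ →ₗ[ℝ] ℝ :=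
  p.compl₁₂ (.fst ℝ E ℝ) (.fst ℝ E' ℝ) -
    (LinearMap.mul ℝ ℝ).compl₁₂ (.snd ℝ E ℝ) (.snd ℝ E' ℝ)

@[simp]
theorem slackPairing_apply (p : E →ₗ[ℝ] E' →ₗ[ℝ] ℝ) (y : E × ℝ) (z : E' × ℝ) :
    slackPairing p y z = p y.1 z.1 - y.2 * z.2 :=
  rfl

section Topology

variable [TopologicalSpace E] [TopologicalSpace E'] (p : E →ₗ[ℝ] E' →ₗ[ℝ] ℝ) [p.IsContPerfPair]

theorem continuous_uncurry_slackPairing :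
    Continuous fun (y, z) ↦ slackPairing p y z := by
  have hp : Continuous fun w : (E × ℝ) × (E' × ℝ) ↦ p w.1.1 w.2.1 :=
    p.continuous_uncurry_of_isContPerfPair.comp (continuous_fst.prodMap continuous_fst)
  have hmul : Continuous fun w : (E × ℝ) × (E' × ℝ) ↦ w.1.2 * w.2.2 := by fun_prop
  exact hp.sub hmul

theorem bijective_slackPairing :
    Function.Bijective fun y ↦ (⟨slackPairing p y,
      (continuous_uncurry_slackPairing p).comp <| .prodMk_right y⟩ : StrongDual ℝ (E' × ℝ)) := by
  refine ⟨fun y y' hyy' ↦ ?_, fun f ↦ ?_⟩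
  · have heq (z : E' × ℝ) : slackPairing p y z = slackPairing p y' z := DFunLike.congr_fun hyy' z
    refine Prod.ext (p.toContPerfPair.injective (ContinuousLinearMap.ext fun α ↦ ?_)) ?_
    · simpa using heq (α, 0)
    · simpa using heq (0, 1)
  · refine ⟨(p.toContPerfPair.symm (f.comp (.inl ℝ E' ℝ)), -f (0, 1)), ?_⟩
    have hp (α : E') : p (p.toContPerfPair.symm (f.comp (.inl ℝ E' ℝ))) α = f (α, 0) := by
      rw [← LinearMap.toContPerfPair_apply, LinearEquiv.apply_symm_apply]
      rfl
    ext z <;> simp [← hp]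

instance slackPairing.instIsContPerfPair : (slackPairing p).IsContPerfPair where
  continuous_uncurry := continuous_uncurry_slackPairing p
  bijective_left := bijective_slackPairing p
  bijective_right := by
    have flip_eq : (slackPairing p).flip = slackPairing p.flip := by
      ext <;> simp
    simpa only [flip_eq] using bijective_slackPairing p.flip

end Topology

/-- The cone `{(x, s) : s ≥ 0, A x - s b ∈ K}` over `{x : A x - b ∈ K}`, which is its slice at
height `s = 1`. -/
def homogenization (A : E →ₗ[ℝ] G) (b : G) (K : PointedCone ℝ G) : PointedCone ℝ (E × ℝ) :=
  K.comap (A.coprod (-LinearMap.toSpanSingleton ℝ G b)) ⊓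
    (PointedCone.positive ℝ ℝ).comap (.snd ℝ E ℝ)

theorem mem_homogenization {A : E →ₗ[ℝ] G} {b : G} {K : PointedCone ℝ G} {y : E × ℝ} :
    y ∈ homogenization A b K ↔ A y.1 - y.2 • b ∈ K ∧ 0 ≤ y.2 := by
  simp [homogenization, sub_eq_add_neg]

/-- The pairs `(α, β)` obtained by Farkas aggregation from multipliers `u` in the dual cone of `K`:
`α = A' u` and `β ≤ ⟨b, u⟩`, where `A'` stands for the adjoint of the constraint map. -/
def farkasCone (q : G →ₗ[ℝ] G' →ₗ[ℝ] ℝ) (A' : G' →ₗ[ℝ] E') (b : G) (K : Set G) :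
    PointedCone ℝ (E' × ℝ) :=
  .ofConeComb {z | ∃ u ∈ dual q K, z.1 = A' u ∧ z.2 ≤ q b u} ⟨0, 0, by simp⟩ <| by
    rintro ⟨_, β₁⟩ ⟨u₁, hu₁, rfl, hβ₁⟩ ⟨_, β₂⟩ ⟨u₂, hu₂, rfl, hβ₂⟩ c₁ hc₁ c₂ hc₂
    refine ⟨c₁ • u₁ + c₂ • u₂,
      add_mem (PointedCone.smul_mem _ hc₁ hu₁) (PointedCone.smul_mem _ hc₂ hu₂), by simp, ?_⟩
    simpa using add_le_add (mul_le_mul_of_nonneg_left hβ₁ hc₁) (mul_le_mul_of_nonneg_left hβ₂ hc₂)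

theorem dual_farkasCone [TopologicalSpace G] [IsTopologicalAddGroup G] [ContinuousSMul ℝ G]
    [LocallyConvexSpace ℝ G] [TopologicalSpace G'] (p : E →ₗ[ℝ] E' →ₗ[ℝ] ℝ)
    (q : G →ₗ[ℝ] G' →ₗ[ℝ] ℝ) [q.IsContPerfPair] {A : E →ₗ[ℝ] G} {A' : G' →ₗ[ℝ] E'}
    (hA : ∀ x u, q (A x) u = p x (A' u)) (b : G) (K : ProperCone ℝ G) :
    dual (slackPairing p).flip (farkasCone q A' b K : Set (E' × ℝ)) = homogenization A b K := by
  have slack_eq (x : E) (s : ℝ) (u : G') :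
      slackPairing p (x, s) (A' u, q b u) = q (A x - s • b) u := by
    simp [hA]
  ext ⟨x, s⟩
  rw [mem_homogenization]
  constructor
  · intro hy
    constructor
    · have hbipolar : A x - s • b ∈ ProperCone.dual q.flip (ProperCone.dual q (K : Set G)) := by
        intro u hu
        exact (hy ⟨u, hu, rfl, le_rfl⟩).trans_eq (slack_eq x s u)
      rwa [ProperCone.dual_flip_dual] at hbipolar
    · have h := hy (x := (0, -1)) ⟨0, by simp⟩
      simpa using h
  · rintro ⟨hxs, hs⟩ ⟨_, β⟩ ⟨u, hu, rfl, hβ⟩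
    calc 0 ≤ q (A x - s • b) u := hu hxs
      _ = p x (A' u) - s * q b u := (slack_eq x s u).symm
      _ ≤ p x (A' u) - s * β := by gcongr

theorem dual_homogenization (p : E →ₗ[ℝ] E' →ₗ[ℝ] ℝ) (A : E →ₗ[ℝ] G) (b : G)
    (K : PointedCone ℝ G) (hC : ∃ x, A x - b ∈ K) :
    (dual (slackPairing p) (homogenization A b K : Set (E × ℝ)) : Set (E' × ℝ)) =
      {z | ∀ x, A x - b ∈ K → z.2 ≤ p x z.1} := by
  obtain ⟨x₀, hx₀⟩ := hC
  have slice_eq : {y | y ∈ homogenization A b K ∧ LinearMap.snd ℝ E ℝ y = 1} =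
      (fun x ↦ (x, 1)) '' {x | A x - b ∈ K} := by
    ext ⟨x, s⟩
    simp only [mem_homogenization, Set.mem_ofPred_eq, Set.mem_image, Prod.mk.injEq,
      LinearMap.snd_apply]
    grind [one_smul]
  rw [← dual_slice_eq_dual (slackPairing p) _ (.snd ℝ E ℝ)
    (fun _ hy ↦ (mem_homogenization.1 hy).2) ⟨(x₀, 1), by simpa [mem_homogenization], rfl⟩,
    slice_eq]
  ext z
  simp

theorem cut_stmt_2_general [TopologicalSpace E] [TopologicalSpace E'] [IsTopologicalAddGroup E']
    [ContinuousSMul ℝ E'] [LocallyConvexSpace ℝ E'] [TopologicalSpace G] [IsTopologicalAddGroup G]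
    [ContinuousSMul ℝ G] [LocallyConvexSpace ℝ G] [TopologicalSpace G']
    (p : E →ₗ[ℝ] E' →ₗ[ℝ] ℝ) [p.IsContPerfPair] (q : G →ₗ[ℝ] G' →ₗ[ℝ] ℝ) [q.IsContPerfPair]
    {A : E →ₗ[ℝ] G} {A' : G' →ₗ[ℝ] E'} (hA : ∀ x u, q (A x) u = p x (A' u)) (b : G)
    (K : ProperCone ℝ G) (hC : ∃ x, A x - b ∈ K) :
    {z : E' × ℝ | ∀ x, A x - b ∈ K → z.2 ≤ p x z.1} =
      closure {z : E' × ℝ | ∃ u ∈ dual q (K : Set G), z.1 = A' u ∧ z.2 ≤ q b u} := by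
  calc {z : E' × ℝ | ∀ x, A x - b ∈ K → z.2 ≤ p x z.1}
      = dual (slackPairing p) (homogenization A b K : Set (E × ℝ)) :=
        (dual_homogenization p A b K hC).symm
    _ = dual (slackPairing p)
          (dual (slackPairing p).flip (farkasCone q A' b K : Set (E' × ℝ)) : Set (E × ℝ)) := by
        rw [dual_farkasCone p q hA b K]
    _ = closure (farkasCone q A' b K : Set (E' × ℝ)) := dual_flip_dual_eq_closure _ _

end Farkas

section Coordinates

theorem isContPerfPair_of_isPerfPair {M N : Type*} [NormedAddCommGroup M] [NormedSpace ℝ M]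
    [FiniteDimensional ℝ M] [NormedAddCommGroup N] [NormedSpace ℝ N] [FiniteDimensional ℝ N]
    (P : M →ₗ[ℝ] N →ₗ[ℝ] ℝ) [P.IsPerfPair] : P.IsContPerfPair where
  continuous_uncurry := P.toContinuousBilinearMap.continuous₂
  bijective_left :=
    LinearMap.toContinuousLinearMap.bijective.comp (LinearMap.IsPerfPair.bijective_left P)
  bijective_right :=
    LinearMap.toContinuousLinearMap.bijective.comp (LinearMap.IsPerfPair.bijective_right P)

instance isContPerfPair_dotProductBilin {ι : Type*} [Fintype ι] :
    (dotProductBilin ℝ ℝ : (ι → ℝ) →ₗ[ℝ] (ι → ℝ) →ₗ[ℝ] ℝ).IsContPerfPair := by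
  classical
  have : (dotProductBilin ℝ ℝ : (ι → ℝ) →ₗ[ℝ] (ι → ℝ) →ₗ[ℝ] ℝ).IsPerfPair :=
    inferInstanceAs (dotProductEquiv ℝ ι).toLinearMap.IsPerfPair
  exact isContPerfPair_of_isPerfPair _

theorem dualCone'_eq_dual {k : ℕ} (K : Set (Fin k → ℝ)) :
    dualCone' K = (dual (dotProductBilin ℝ ℝ) K : Set (Fin k → ℝ)) := by
  ext u
  simp [dualCone', dotProduct_comm u]

end Coordinates

/-- If `C = {x : Ax − b ∈ K}` is nonempty, then the set of valid inequalities
for `C` equals the closure of the set of Farkas-aggregated pairs. -/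
theorem cut_stmt_2 {m n : ℕ} (A : Matrix (Fin m) (Fin n) ℝ) (b : Fin m → ℝ)
    (K : Set (Fin m → ℝ)) (hK : IsProperCone K)
    (hA : LinearIndependent ℝ Aᵀ)
    (hC : {x : Fin n → ℝ | A.mulVec x - b ∈ K}.Nonempty) :
    {p : (Fin n → ℝ) × ℝ | ∀ x : Fin n → ℝ, A.mulVec x - b ∈ K → p.2 ≤ p.1 ⬝ᵥ x} =
      closure {p : (Fin n → ℝ) × ℝ |
        ∃ u ∈ dualCone' K, p.1 = Aᵀ.mulVec u ∧ p.2 ≤ b ⬝ᵥ u} := by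
  obtain ⟨hclosed, hconv, hsmul, -, hinterior⟩ := hK
  obtain ⟨K, rfl⟩ := exists_properCone_coe_eq (hinterior.mono interior_subset) hclosed hconv hsmul
  have hadj (x u) : A.mulVecLin x ⬝ᵥ u = x ⬝ᵥ Aᵀ.mulVecLin u := by
    rw [mulVecLin_apply, mulVecLin_apply, mulVec_transpose, dotProduct_comm, dotProduct_mulVec,
      dotProduct_comm]
  simpa [dualCone'_eq_dual, mulVec_transpose, dotProduct_comm] using
    cut_stmt_2_general (dotProductBilin ℝ ℝ) (dotProductBilin ℝ ℝ) hadj b K hC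
end

section
/- Let C = {x ∈ ℝⁿ : Ax − b ∈ K}, where A ∈ ℝ^{m×n} has full column rank and K ⊆ ℝ^m is a proper cone, and let F = {(α, β) ∈ ℝⁿ × ℝ : ∃ u ∈ K* with α = Aᵀu and β ≤ bᵀu}. If the system Ax ⪰_K b is strongly feasible, i.e., there exists x₀ ∈ ℝⁿ with Ax₀ − b ∈ int K, then F = C°: a pair (α, β) is a valid inequality for C if and only if it is obtained by Farkas aggregation with a finite multiplier u ∈ K*. -/
open Matrix

/-!
Validity of `(α, β)` says that the affine image `{(L x - b, β - α x)}` misses the interior of the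
cone `K × ℝ≥0`, so Hahn–Banach separates the two by a functional `(g, t)`, nonnegative on the cone
and nonpositive on the image. Strong feasibility rules out a vertical hyperplane: it forces `t > 0`.
Dividing by `t` leaves an affine function `x ↦ α x - β - t⁻¹ g (L x - b)` that is bounded below,
hence constant, and comparing coefficients shows that `t⁻¹ g` is the multiplier.
-/

section Functionals

variable {E : Type*} [AddCommGroup E] [Module ℝ E]

theorem nonneg_of_forall_mem_pointedCone_le (K : PointedCone ℝ E) (f : E →ₗ[ℝ] ℝ) {c : ℝ}
    (hf : ∀ y ∈ K, c ≤ f y) {y : E} (hy : y ∈ K) : 0 ≤ f y := by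
  by_contra! hneg
  obtain ⟨N, hN⟩ := exists_nat_gt (c / f y)
  have hscaled : c ≤ N * f y := by
    simpa using hf _ (K.smul_mem N.cast_nonneg hy)
  exact hscaled.not_gt ((div_lt_iff_of_neg hneg).mp hN)

theorem eq_zero_of_forall_le_linearMap (f : E →ₗ[ℝ] ℝ) {c : ℝ} (hf : ∀ x, c ≤ f x) : f = 0 := by
  have hnonneg (x : E) : 0 ≤ f x :=
    nonneg_of_forall_mem_pointedCone_le ⊤ f (fun y _ ↦ hf y) Submodule.mem_top
  ext x
  exact le_antisymm (by simpa using hnonneg (-x)) (hnonneg x)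

variable [TopologicalSpace E] [IsTopologicalAddGroup E] [ContinuousSMul ℝ E]

theorem pos_of_mem_interior_of_forall_mem_nonneg {s : Set E} {f : StrongDual ℝ E} (hf₀ : f ≠ 0)
    (hf : ∀ y ∈ s, 0 ≤ f y) {y : E} (hy : y ∈ interior s) : 0 < f y := by
  have himage : f '' interior s ⊆ interior (Set.Ici 0) :=
    interior_maximal (Set.image_subset_iff.mpr fun z hz ↦ hf z (interior_subset hz))
      (f.isOpenMap_of_ne_zero hf₀ _ isOpen_interior)
  rw [interior_Ici] at himage
  exact himage ⟨y, hy, rfl⟩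

theorem exists_separating_pointedCone (K : PointedCone ℝ E) {T : Set E} (hT : Convex ℝ T)
    (hdisj : Disjoint (interior (K : Set E)) T) (hK : (interior (K : Set E)).Nonempty)
    (hT₀ : T.Nonempty) :
    ∃ f : StrongDual ℝ E, (∀ y ∈ K, 0 ≤ f y) ∧ (∀ y ∈ interior (K : Set E), 0 < f y) ∧
      ∀ z ∈ T, f z ≤ 0 := by
  obtain ⟨f, c, hf₀, hfK, hfT⟩ :=
    geometric_hahn_banach_of_nonempty_interior K.convex hT hdisj hK hT₀
  have hc : 0 ≤ c := by simpa using hfK 0 K.zero_mem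
  have hnonneg : ∀ y ∈ K, 0 ≤ (-f) y := fun y hy ↦
    nonneg_of_forall_mem_pointedCone_le K (-f : StrongDual ℝ E).toLinearMap (c := -c)
      (fun z hz ↦ neg_le_neg (hfK z hz)) hy
  exact ⟨-f, hnonneg,
    fun y hy ↦ pos_of_mem_interior_of_forall_mem_nonneg (neg_ne_zero.mpr hf₀) hnonneg hy,
    fun z hz ↦ neg_nonpos.mpr (hc.trans (hfT z hz))⟩

end Functionals

section ConicSystem

variable {V E : Type*} [AddCommGroup V] [Module ℝ V] [AddCommGroup E] [Module ℝ E]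

/-- The set `X°` of inequalities `α x ≥ β` valid on `X`, each encoded as the pair `(α, β)` of a
linear functional and a constant. -/
def validInequalities (X : Set V) : Set (Module.Dual ℝ V × ℝ) :=
  {p | ∀ x ∈ X, p.2 ≤ p.1 x}

variable [TopologicalSpace E]

/-- The set `F` of inequalities obtained by Farkas aggregation from the system `L x - b ∈ K`, with
multipliers in the dual cone of `K`. The multipliers are required to be continuous, which is
automatic in finite dimension. -/
def farkasAggregates (L : V →ₗ[ℝ] E) (b : E) (K : Set E) : Set (Module.Dual ℝ V × ℝ) :=
  {p | ∃ u : StrongDual ℝ E, (∀ y ∈ K, 0 ≤ u y) ∧ p.1 = u.toLinearMap ∘ₗ L ∧ p.2 ≤ u b}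

theorem farkasAggregates_subset_validInequalities (L : V →ₗ[ℝ] E) (b : E) (K : Set E) :
    farkasAggregates L b K ⊆ validInequalities {x | L x - b ∈ K} := by
  rintro ⟨_, β⟩ ⟨u, hu, rfl, hβ⟩ x hx
  have hub : u b ≤ u (L x) := by simpa using hu _ hx
  exact hβ.trans hub

theorem mem_farkasAggregates_of_forall_le {L : V →ₗ[ℝ] E} {b : E} {K : Set E}
    {α : Module.Dual ℝ V} {β : ℝ} {u : StrongDual ℝ E} (hu : ∀ y ∈ K, 0 ≤ u y)
    (hle : ∀ x, u (L x - b) ≤ α x - β) : (α, β) ∈ farkasAggregates L b K := by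
  have hslack : α - u.toLinearMap ∘ₗ L = 0 := by
    refine eq_zero_of_forall_le_linearMap _ (c := β - u b) fun x ↦ ?_
    have hx : u (L x) - u b ≤ α x - β := by simpa only [map_sub] using hle x
    change β - u b ≤ α x - u (L x)
    linarith
  have hβ : β ≤ u b := by simpa using hle 0
  exact ⟨u, hu, sub_eq_zero.mp hslack, hβ⟩

variable [IsTopologicalAddGroup E] [ContinuousSMul ℝ E] {L : V →ₗ[ℝ] E} {b : E}
  {K : PointedCone ℝ E} {α : Module.Dual ℝ V} {β : ℝ}

theorem exists_separating_prod_nonneg (hfeas : ∃ x₀, L x₀ - b ∈ interior (K : Set E))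
    (hvalid : (α, β) ∈ validInequalities {x | L x - b ∈ K}) :
    ∃ f : StrongDual ℝ (E × ℝ), (∀ y ∈ K, ∀ s, 0 ≤ s → 0 ≤ f (y, s)) ∧
      (∀ y ∈ interior (K : Set E), ∀ s, 0 < s → 0 < f (y, s)) ∧
      ∀ x, f (L x - b, β - α x) ≤ 0 := by
  obtain ⟨x₀, hx₀⟩ := hfeas
  let P : PointedCone ℝ (E × ℝ) := K.prod (PointedCone.positive ℝ ℝ)
  have hP : interior (P : Set (E × ℝ)) = interior (K : Set E) ×ˢ Set.Ioi 0 := by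
    rw [← interior_Ici, ← interior_prod_eq]
    rfl
  let φ : V →ᵃ[ℝ] E × ℝ := (L.toAffineMap - AffineMap.const ℝ V b).prod
    (AffineMap.const ℝ V β - α.toAffineMap)
  have hconvex : Convex ℝ (Set.range φ) := by
    simpa only [Set.image_univ] using convex_univ.affine_image φ
  have hdisj : Disjoint (interior (P : Set (E × ℝ))) (Set.range φ) := by
    rw [hP, Set.disjoint_right]
    rintro _ ⟨x, rfl⟩ ⟨hx, hpos⟩
    exact (sub_pos.mp hpos).not_ge (hvalid x (interior_subset (s := (K : Set E)) hx))
  have hP₀ : (interior (P : Set (E × ℝ))).Nonempty := by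
    rw [hP]
    exact Set.Nonempty.prod ⟨_, hx₀⟩ Set.nonempty_Ioi
  obtain ⟨f, hfP, hfint, hfφ⟩ :=
    exists_separating_pointedCone P hconvex hdisj hP₀ (Set.range_nonempty φ)
  exact ⟨f, fun y hy s hs ↦ hfP (y, s) ⟨hy, hs⟩,
    fun y hy s hs ↦ hfint (y, s) (hP ▸ ⟨hy, hs⟩), fun x ↦ hfφ _ ⟨x, rfl⟩⟩

theorem exists_multiplier_of_mem_validInequalities
    (hfeas : ∃ x₀, L x₀ - b ∈ interior (K : Set E))
    (hvalid : (α, β) ∈ validInequalities {x | L x - b ∈ K}) :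
    ∃ u : StrongDual ℝ E, (∀ y ∈ K, 0 ≤ u y) ∧ ∀ x, u (L x - b) ≤ α x - β := by
  obtain ⟨f, hfK, hfint, hfimage⟩ := exists_separating_prod_nonneg hfeas hvalid
  obtain ⟨x₀, hx₀⟩ := hfeas
  set g : StrongDual ℝ E := f.comp (.inl ℝ E ℝ)
  set t : ℝ := f (0, 1)
  have hf (y : E) (s : ℝ) : f (y, s) = g y + s * t := by
    rw [← f.comp_inl_add_comp_inr, ← smul_eq_mul, ← map_smul]
    simp [g]
  have ht_ne : t ≠ 0 := by
    intro ht_zero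
    have hpos : 0 < g (L x₀ - b) := by
      simpa only [hf, ht_zero, mul_zero, add_zero] using hfint _ hx₀ 1 one_pos
    have hnonpos : g (L x₀ - b) ≤ 0 := by
      simpa only [hf, ht_zero, mul_zero, add_zero] using hfimage x₀
    exact hpos.not_ge hnonpos
  have ht : 0 < t := (hfK 0 K.zero_mem 1 zero_le_one).lt_of_ne' ht_ne
  refine ⟨t⁻¹ • g, fun y hy ↦ mul_nonneg (inv_nonneg.mpr ht.le) (hfK y hy 0 le_rfl), fun x ↦ ?_⟩
  have hle : g (L x - b) ≤ t * (α x - β) := by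
    linarith [hf (L x - b) (β - α x), hfimage x]
  exact (inv_mul_le_iff₀ ht).mpr hle

theorem cut_stmt_3_general (hfeas : ∃ x₀, L x₀ - b ∈ interior (K : Set E)) :
    farkasAggregates L b K = validInequalities {x | L x - b ∈ K} := by
  refine (farkasAggregates_subset_validInequalities L b K).antisymm ?_
  rintro ⟨α, β⟩ hvalid
  obtain ⟨u, hu, hle⟩ := exists_multiplier_of_mem_validInequalities hfeas hvalid
  exact mem_farkasAggregates_of_forall_le hu hle

end ConicSystem

section MatrixSystem

namespace IsProperCone

variable {m : ℕ} {K : Set (Fin m → ℝ)}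

theorem nonempty (hK : IsProperCone K) : K.Nonempty :=
  hK.2.2.2.2.mono interior_subset

theorem smul_mem (hK : IsProperCone K) {t : ℝ} (ht : 0 ≤ t) {x : Fin m → ℝ} (hx : x ∈ K) :
    t • x ∈ K :=
  hK.2.2.1 x hx t ht

theorem add_mem (hK : IsProperCone K) {x y : Fin m → ℝ} (hx : x ∈ K) (hy : y ∈ K) : x + y ∈ K := by
  have hmid : (1 / 2 : ℝ) • x + (1 / 2 : ℝ) • y ∈ K :=
    hK.2.1 hx hy one_half_pos.le one_half_pos.le (add_halves 1)
  simpa [smul_smul] using hK.smul_mem zero_le_two hmid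

/-- A proper cone in the sense of `IsProperCone`, as a bundled `PointedCone`: in Mathlib that name
means a convex cone containing the origin, so the condition `K ∩ (-K) = {0}` is forgotten. -/
def toPointedCone (hK : IsProperCone K) : PointedCone ℝ (Fin m → ℝ) :=
  .ofConeComb K hK.nonempty fun _ hx _ hy _ ha _ hb ↦
    hK.add_mem (hK.smul_mem ha hx) (hK.smul_mem hb hy)

end IsProperCone

theorem dotProductEquiv_transpose_mulVec {m n : Type*} [Fintype m] [DecidableEq m] [Fintype n]
    [DecidableEq n] (A : Matrix m n ℝ) (u : m → ℝ) :
    dotProductEquiv ℝ n (Aᵀ *ᵥ u) = dotProductEquiv ℝ m u ∘ₗ A.mulVecLin := by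
  refine LinearMap.ext fun x ↦ ?_
  simp [mulVec_transpose, dotProduct_mulVec]

theorem preimage_farkasAggregates_mulVecLin {m n : ℕ} (A : Matrix (Fin m) (Fin n) ℝ)
    (b : Fin m → ℝ) (K : Set (Fin m → ℝ)) :
    Prod.map (dotProductEquiv ℝ (Fin n)) id ⁻¹' farkasAggregates A.mulVecLin b K =
      {p : (Fin n → ℝ) × ℝ | ∃ u ∈ dualCone' K, p.1 = Aᵀ *ᵥ u ∧ p.2 ≤ b ⬝ᵥ u} := by
  ext ⟨α, β⟩
  let e := (dotProductEquiv ℝ (Fin m)).trans LinearMap.toContinuousLinearMap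
  refine e.surjective.exists.trans (exists_congr fun u ↦ and_congr Iff.rfl (and_congr ?_ ?_))
  · exact (dotProductEquiv ℝ (Fin n)).injective.eq_iff' (dotProductEquiv_transpose_mulVec A u)
  · exact iff_of_eq (congrArg (β ≤ ·) (dotProduct_comm u b))

end MatrixSystem

/-- If the system `Ax − b ∈ K` is strongly feasible, then the set of
Farkas-aggregated pairs equals the set of valid inequalities for `C`. -/
theorem cut_stmt_3 {m n : ℕ} (A : Matrix (Fin m) (Fin n) ℝ) (b : Fin m → ℝ)
    (K : Set (Fin m → ℝ)) (hK : IsProperCone K)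
    (hA : LinearIndependent ℝ Aᵀ)
    (hstrong : ∃ x₀ : Fin n → ℝ, A.mulVec x₀ - b ∈ interior K) :
    {p : (Fin n → ℝ) × ℝ | ∃ u ∈ dualCone' K, p.1 = Aᵀ.mulVec u ∧ p.2 ≤ b ⬝ᵥ u} =
      {p : (Fin n → ℝ) × ℝ | ∀ x : Fin n → ℝ, A.mulVec x - b ∈ K → p.2 ≤ p.1 ⬝ᵥ x} := by
  rw [← preimage_farkasAggregates_mulVecLin]
  exact congrArg (Prod.map (dotProductEquiv ℝ (Fin n)) id ⁻¹' ·)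
    (cut_stmt_3_general (L := A.mulVecLin) (K := hK.toPointedCone) hstrong)
end

section
/- Let A ∈ ℝ^{m×n}, b ∈ ℝ^m, K ⊆ ℝⁿ a proper cone, and for each h = 1,…,H let D_h ∈ ℝ^{m_h×n}, d_h ∈ ℝ^{m_h}, Q_h ⊆ ℝ^{m_h} a proper cone; let x̄ ∈ ℝⁿ satisfy Ax̄ = b and let C ⊆ {x : Ax = b}. Suppose (α, β, u, λ, v) is CGCP-feasible and let u₀ ∈ ℝ^m. Define (α̃, β̃, ũ, λ̃, ṽ) = (α − Aᵀu₀, β − bᵀu₀, (u_h − u₀)_h, λ, v). Then (α̃, β̃, ũ, λ̃, ṽ) is CGCP-feasible, α̃ᵀx̄ − β̃ = αᵀx̄ − β, and C ∩ {x : αᵀx ≥ β} = C ∩ {x : α̃ᵀx ≥ β̃}. -/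
open Matrix

/-- A tuple \`(α, β, u, λ, v)\` is CGCP-feasible if
\`α = Aᵀu_h + λ_h + D_hᵀv_h\` and \`β ≤ bᵀu_h + d_hᵀv_h\` with \`λ_h ∈ K*\`,
\`v_h ∈ Q_h*\`, for every \`h\`. -/
def CGCPFeasible {m n H : ℕ} (A : Matrix (Fin m) (Fin n) ℝ) (b : Fin m → ℝ)
    (K : Set (Fin n → ℝ)) (mq : Fin H → ℕ)
    (D : ∀ h : Fin H, Matrix (Fin (mq h)) (Fin n) ℝ) (d : ∀ h : Fin H, Fin (mq h) → ℝ)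
    (Q : ∀ h : Fin H, Set (Fin (mq h) → ℝ))
    (α : Fin n → ℝ) (β : ℝ) (u : Fin H → Fin m → ℝ)
    (lam : Fin H → Fin n → ℝ) (v : ∀ h : Fin H, Fin (mq h) → ℝ) : Prop :=
  ∀ h : Fin H, lam h ∈ dualCone' K ∧ v h ∈ dualCone' (Q h) ∧
    α = Aᵀ.mulVec (u h) + lam h + (D h)ᵀ.mulVec (v h) ∧
    β ≤ b ⬝ᵥ u h + d h ⬝ᵥ v h

/-! On the affine space `{x : Ax = b}` the linear form `x ↦ (Aᵀu₀)ᵀx` is the constant `bᵀu₀`, so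
subtracting `Aᵀu₀` from `α` and `bᵀu₀` from `β` does not change the slack `αᵀx - β` there. The
objective value is the slack at `xbar`, and the cut asks for the slack to be nonnegative. In the
CGCP constraints the same two terms are absorbed by replacing every `u_h` with `u_h - u₀`. -/

section Slack

variable {R m n : Type*} [Fintype m] [Fintype n] [NonUnitalCommRing R]

theorem sub_transpose_mulVec_dotProduct (A : Matrix m n R) (α : n → R) (u : m → R) (x : n → R) :
    (α - Aᵀ *ᵥ u) ⬝ᵥ x = α ⬝ᵥ x - (A *ᵥ x) ⬝ᵥ u := by
  rw [sub_dotProduct, mulVec_transpose, ← dotProduct_mulVec, dotProduct_comm u]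

variable {A : Matrix m n R} {b : m → R}

theorem slack_sub_transpose_mulVec {x : n → R} (hx : A *ᵥ x = b) (α : n → R) (β : R) (u : m → R) :
    (α - Aᵀ *ᵥ u) ⬝ᵥ x - (β - b ⬝ᵥ u) = α ⬝ᵥ x - β := by
  rw [sub_transpose_mulVec_dotProduct, hx, sub_sub_sub_cancel_right]

theorem inter_halfspace_sub_transpose_mulVec [PartialOrder R] [IsOrderedAddMonoid R]
    {C : Set (n → R)} (hC : C ⊆ {x | A *ᵥ x = b}) (α : n → R) (β : R) (u : m → R) :
    C ∩ {x | β - b ⬝ᵥ u ≤ (α - Aᵀ *ᵥ u) ⬝ᵥ x} = C ∩ {x | β ≤ α ⬝ᵥ x} := by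
  ext x
  refine and_congr_right fun hx => ?_
  calc β - b ⬝ᵥ u ≤ (α - Aᵀ *ᵥ u) ⬝ᵥ x
      ↔ 0 ≤ (α - Aᵀ *ᵥ u) ⬝ᵥ x - (β - b ⬝ᵥ u) := sub_nonneg.symm
    _ ↔ 0 ≤ α ⬝ᵥ x - β := by rw [slack_sub_transpose_mulVec (hC hx)]
    _ ↔ β ≤ α ⬝ᵥ x := sub_nonneg

end Slack

section Translation

variable {m n H : ℕ} {A : Matrix (Fin m) (Fin n) ℝ} {b : Fin m → ℝ} {K : Set (Fin n → ℝ)}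
  {mq : Fin H → ℕ} {D : ∀ h : Fin H, Matrix (Fin (mq h)) (Fin n) ℝ}
  {d : ∀ h : Fin H, Fin (mq h) → ℝ} {Q : ∀ h : Fin H, Set (Fin (mq h) → ℝ)}
  {α : Fin n → ℝ} {β : ℝ} {u : Fin H → Fin m → ℝ}
  {lam : Fin H → Fin n → ℝ} {v : ∀ h : Fin H, Fin (mq h) → ℝ}

theorem CGCPFeasible.translate (hfeas : CGCPFeasible A b K mq D d Q α β u lam v)
    (u₀ : Fin m → ℝ) :
    CGCPFeasible A b K mq D d Q (α - Aᵀ *ᵥ u₀) (β - b ⬝ᵥ u₀) (fun h => u h - u₀) lam v := by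
  intro h
  obtain ⟨hlam, hv, hα, hβ⟩ := hfeas h
  refine ⟨hlam, hv, ?_, ?_⟩
  · rw [hα, mulVec_sub]
    abel
  · rw [dotProduct_sub]
    linarith

theorem cut_stmt_8_general {xbar : Fin n → ℝ} (hxbar : A *ᵥ xbar = b)
    {C : Set (Fin n → ℝ)} (hC : C ⊆ {x | A *ᵥ x = b})
    (hfeas : CGCPFeasible A b K mq D d Q α β u lam v) (u₀ : Fin m → ℝ) :
    CGCPFeasible A b K mq D d Q (α - Aᵀ *ᵥ u₀) (β - b ⬝ᵥ u₀) (fun h => u h - u₀) lam v ∧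
    (α - Aᵀ *ᵥ u₀) ⬝ᵥ xbar - (β - b ⬝ᵥ u₀) = α ⬝ᵥ xbar - β ∧
    C ∩ {x | β ≤ α ⬝ᵥ x} = C ∩ {x | β - b ⬝ᵥ u₀ ≤ (α - Aᵀ *ᵥ u₀) ⬝ᵥ x} :=
  ⟨hfeas.translate u₀, slack_sub_transpose_mulVec hxbar α β u₀,
    (inter_halfspace_sub_transpose_mulVec hC α β u₀).symm⟩

end Translation

/-- Translating a CGCP-feasible tuple by `u₀` preserves feasibility, the
objective value, and the portion of `C ⊆ {x : Ax = b}` cut off. -/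
theorem cut_stmt_8 {m n H : ℕ} (A : Matrix (Fin m) (Fin n) ℝ) (b : Fin m → ℝ)
    (K : Set (Fin n → ℝ)) (hK : IsProperCone K)
    (mq : Fin H → ℕ) (D : ∀ h : Fin H, Matrix (Fin (mq h)) (Fin n) ℝ)
    (d : ∀ h : Fin H, Fin (mq h) → ℝ) (Q : ∀ h : Fin H, Set (Fin (mq h) → ℝ))
    (hQ : ∀ h, IsProperCone (Q h))
    (xbar : Fin n → ℝ) (hxbar : A.mulVec xbar = b)
    (C : Set (Fin n → ℝ)) (hC : C ⊆ {x : Fin n → ℝ | A.mulVec x = b})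
    (α : Fin n → ℝ) (β : ℝ) (u : Fin H → Fin m → ℝ)
    (lam : Fin H → Fin n → ℝ) (v : ∀ h : Fin H, Fin (mq h) → ℝ)
    (hfeas : CGCPFeasible A b K mq D d Q α β u lam v)
    (u₀ : Fin m → ℝ) :
    CGCPFeasible A b K mq D d Q (α - Aᵀ.mulVec u₀) (β - b ⬝ᵥ u₀)
        (fun h => u h - u₀) lam v ∧
    (α - Aᵀ.mulVec u₀) ⬝ᵥ xbar - (β - b ⬝ᵥ u₀) = α ⬝ᵥ xbar - β ∧
    C ∩ {x : Fin n → ℝ | β ≤ α ⬝ᵥ x} =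
      C ∩ {x : Fin n → ℝ | β - b ⬝ᵥ u₀ ≤ (α - Aᵀ.mulVec u₀) ⬝ᵥ x} :=
  cut_stmt_8_general hxbar hC hfeas u₀
end

section
/- (Tightness under the α normalization.) Let ‖·‖ be a norm on ℝⁿ with dual norm ‖y‖_* = sup{yᵀx : ‖x‖ ≤ 1}. Suppose (α, β, u, λ, v) is CGCP-feasible with ‖α‖_* ≤ 1, and (x, y, z) is MCP-feasible, i.e., Σ_h y_h = x, Σ_h z_h = 1, A y_h = z_h b, D_h y_h − z_h d_h ∈ Q_h, y_h ∈ K, z_h ≥ 0 for all h. If the zero-duality-gap relation αᵀx̄ − β = −‖x̄ − x‖ holds, then αᵀx = β. -/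
open Matrix

/-!
Two inequalities meet at `x`. Weak duality on each disjunct gives `z_h β ≤ αᵀy_h`, and summing over
`h` gives `β ≤ αᵀx`. Conversely `‖α‖_* ≤ 1` gives `αᵀx - αᵀx̄ ≤ ‖x - x̄‖`, whose right-hand side is
`β - αᵀx̄` by the zero duality gap; hence `αᵀx ≤ β`.
-/

section WeakDuality

variable {R ι E F : Type*} {G : ι → Type*} [CommRing R] [PartialOrder R]
  [AddCommGroup E] [Module R E] [AddCommGroup F] [Module R F]
  [∀ h, AddCommGroup (G h)] [∀ h, Module R (G h)]

/-- Coordinate-free CGCP-feasibility: matrices become linear maps, and the vectors `α`, `u_h`,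
`λ_h`, `v_h` become linear functionals. Membership of `λ_h` and `v_h` in the
dual cones is spelled out as nonnegativity on `K` and `Q_h`. -/
structure LinearCGCPFeasible (A : E →ₗ[R] F) (b : F) (K : Set E) (D : ∀ h, E →ₗ[R] G h)
    (d : ∀ h, G h) (Q : ∀ h, Set (G h)) (α : Module.Dual R E) (β : R) (u : ι → Module.Dual R F)
    (lam : ι → Module.Dual R E) (v : ∀ h, Module.Dual R (G h)) : Prop where
  lam_nonneg : ∀ h, ∀ w ∈ K, 0 ≤ lam h w
  v_nonneg : ∀ h, ∀ w ∈ Q h, 0 ≤ v h w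
  eq_add : ∀ h, α = u h ∘ₗ A + lam h + v h ∘ₗ D h
  le_add : ∀ h, β ≤ u h b + v h (d h)

/-- Coordinate-free MCP-feasibility of `(x, y, z)`: the point `x` splits into pieces `y_h`, each in
the homogenization of the `h`-th disjunct with weight `z_h`. -/
structure LinearMCPFeasible [Fintype ι] (A : E →ₗ[R] F) (b : F) (K : Set E)
    (D : ∀ h, E →ₗ[R] G h) (d : ∀ h, G h) (Q : ∀ h, Set (G h))
    (x : E) (y : ι → E) (z : ι → R) : Prop where
  sum_y : ∑ h, y h = x
  sum_z : ∑ h, z h = 1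
  map_y : ∀ h, A (y h) = z h • b
  sub_mem : ∀ h, D h (y h) - z h • d h ∈ Q h
  y_mem : ∀ h, y h ∈ K
  z_nonneg : ∀ h, 0 ≤ z h

variable [IsOrderedRing R] {A : E →ₗ[R] F} {b : F} {K : Set E} {D : ∀ h, E →ₗ[R] G h}
  {d : ∀ h, G h} {Q : ∀ h, Set (G h)} {α : Module.Dual R E} {β : R} {u : ι → Module.Dual R F}
  {lam : ι → Module.Dual R E} {v : ∀ h, Module.Dual R (G h)}

theorem LinearCGCPFeasible.mul_le_apply (hcut : LinearCGCPFeasible A b K D d Q α β u lam v)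
    {h : ι} {y : E} {z : R} (hAy : A y = z • b) (hDy : D h y - z • d h ∈ Q h) (hy : y ∈ K)
    (hz : 0 ≤ z) : z * β ≤ α y := by
  have hlam : 0 ≤ lam h y := hcut.lam_nonneg h y hy
  have hv : z * v h (d h) ≤ v h (D h y) := by
    simpa only [map_sub, map_smul, smul_eq_mul, sub_nonneg] using hcut.v_nonneg h _ hDy
  calc z * β ≤ z * (u h b + v h (d h)) := mul_le_mul_of_nonneg_left (hcut.le_add h) hz
    _ = z * u h b + 0 + z * v h (d h) := by ring
    _ ≤ z * u h b + lam h y + v h (D h y) := by gcongr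
    _ = α y := by simp [hcut.eq_add h, hAy]

theorem LinearCGCPFeasible.le_apply [Fintype ι]
    (hcut : LinearCGCPFeasible A b K D d Q α β u lam v) {x : E} {y : ι → E} {z : ι → R}
    (hx : LinearMCPFeasible A b K D d Q x y z) : β ≤ α x :=
  calc β = ∑ h, z h * β := by rw [← Finset.sum_mul, hx.sum_z, one_mul]
    _ ≤ ∑ h, α (y h) := Finset.sum_le_sum fun h _ ↦
        hcut.mul_le_apply (hx.map_y h) (hx.sub_mem h) (hx.y_mem h) (hx.z_nonneg h)
    _ = α x := by rw [← map_sum, hx.sum_y]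

end WeakDuality

theorem CGCPFeasible.linearCGCPFeasible {m n H : ℕ} {A : Matrix (Fin m) (Fin n) ℝ}
    {b : Fin m → ℝ} {K : Set (Fin n → ℝ)} {mq : Fin H → ℕ}
    {D : ∀ h : Fin H, Matrix (Fin (mq h)) (Fin n) ℝ} {d : ∀ h : Fin H, Fin (mq h) → ℝ}
    {Q : ∀ h : Fin H, Set (Fin (mq h) → ℝ)} {α : Fin n → ℝ} {β : ℝ} {u : Fin H → Fin m → ℝ}
    {lam : Fin H → Fin n → ℝ} {v : ∀ h : Fin H, Fin (mq h) → ℝ}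
    (hcut : CGCPFeasible A b K mq D d Q α β u lam v) :
    LinearCGCPFeasible A.mulVecLin b K (fun h ↦ (D h).mulVecLin) d Q (dotProductBilin ℝ ℝ α) β
      (fun h ↦ dotProductBilin ℝ ℝ (u h)) (fun h ↦ dotProductBilin ℝ ℝ (lam h))
      (fun h ↦ dotProductBilin ℝ ℝ (v h)) where
  lam_nonneg h := (hcut h).1
  v_nonneg h := (hcut h).2.1
  eq_add h := by
    refine LinearMap.ext fun w ↦ ?_
    change α ⬝ᵥ w = u h ⬝ᵥ A *ᵥ w + lam h ⬝ᵥ w + v h ⬝ᵥ D h *ᵥ w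
    rw [(hcut h).2.2.1, add_dotProduct, add_dotProduct, mulVec_transpose, mulVec_transpose,
      dotProduct_mulVec, dotProduct_mulVec]
  le_add h := by
    change β ≤ u h ⬝ᵥ b + v h ⬝ᵥ d h
    simpa only [dotProduct_comm] using (hcut h).2.2.2

section DualNorm

variable {E : Type*} [AddCommGroup E] [Module ℝ E]

/-- The dual norm of a linear functional `f` with respect to `p`: the supremum of `f` over the
closed unit ball of `p`. It has the junk value `0` when `f` is unbounded on that ball. -/
noncomputable def dualNorm (p : Seminorm ℝ E) (f : Module.Dual ℝ E) : ℝ :=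
  sSup {t | ∃ w, p w ≤ 1 ∧ t = f w}

variable [FiniteDimensional ℝ E] {p : Seminorm ℝ E}

theorem bddAbove_apply_of_seminorm_le_one (hp : ∀ w, p w = 0 → w = 0)
    (f : Module.Dual ℝ E) : BddAbove {t | ∃ w, p w ≤ 1 ∧ t = f w} := by
  let _ : Norm E := ⟨p⟩
  have core : NormedSpace.Core ℝ E :=
    { norm_nonneg := apply_nonneg p
      norm_smul := map_smul_eq_mul p
      norm_triangle := map_add_le_add p
      norm_eq_zero_iff w := ⟨hp w, fun hw ↦ hw ▸ map_zero p⟩ }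
  let _ : NormedAddCommGroup E := .ofCore core
  let _ : NormedSpace ℝ E := .ofCore core
  refine ⟨‖f.toContinuousLinearMap‖, ?_⟩
  rintro _ ⟨w, hw, rfl⟩
  exact (le_abs_self _).trans (f.toContinuousLinearMap.unit_le_opNorm w hw)

theorem apply_le_dualNorm_mul (hp : ∀ w, p w = 0 → w = 0) (f : Module.Dual ℝ E) (w : E) :
    f w ≤ dualNorm p f * p w := by
  rcases (apply_nonneg p w).eq_or_lt with hw | hw
  · rw [hp w hw.symm, map_zero, map_zero, mul_zero]
  · have hunit : p ((p w)⁻¹ • w) ≤ 1 := by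
      rw [map_smul_eq_mul, norm_inv, Real.norm_of_nonneg hw.le, inv_mul_cancel₀ hw.ne']
    have hsup : f ((p w)⁻¹ • w) ≤ dualNorm p f :=
      le_csSup (bddAbove_apply_of_seminorm_le_one hp f) ⟨_, hunit, rfl⟩
    rwa [map_smul, smul_eq_mul, inv_mul_le_iff₀' hw] at hsup

theorem apply_le_of_dualNorm_le_one (hp : ∀ w, p w = 0 → w = 0) {f : Module.Dual ℝ E}
    (hf : dualNorm p f ≤ 1) (w : E) : f w ≤ p w :=
  (apply_le_dualNorm_mul hp f w).trans (mul_le_of_le_one_left (apply_nonneg p w) hf)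

end DualNorm

-- `hα` says that the dual norm of `α` is at most `1`, without the junk value of `dualNorm`.
theorem cut_stmt_9_general {ι E F : Type*} {G : ι → Type*} [Fintype ι]
    [AddCommGroup E] [Module ℝ E] [AddCommGroup F] [Module ℝ F]
    [∀ h, AddCommGroup (G h)] [∀ h, Module ℝ (G h)]
    {A : E →ₗ[ℝ] F} {b : F} {K : Set E} {D : ∀ h, E →ₗ[ℝ] G h} {d : ∀ h, G h}
    {Q : ∀ h, Set (G h)} {α : Module.Dual ℝ E} {β : ℝ} {u : ι → Module.Dual ℝ F}
    {lam : ι → Module.Dual ℝ E} {v : ∀ h, Module.Dual ℝ (G h)} {x xbar : E} {y : ι → E} {z : ι → ℝ}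
    (p : Seminorm ℝ E) (hα : ∀ w, α w ≤ p w)
    (hcut : LinearCGCPFeasible A b K D d Q α β u lam v)
    (hx : LinearMCPFeasible A b K D d Q x y z) (hgap : α xbar - β = -p (xbar - x)) :
    α x = β := by
  refine le_antisymm ?_ (hcut.le_apply hx)
  have hle : α x - α xbar ≤ p (xbar - x) := by
    rw [← map_sub, map_sub_rev p]
    exact hα (x - xbar)
  linarith

/-- Tightness under the `α` normalization: a CGCP-feasible cut with dual norm
of `α` at most 1 is tight at the MCP projection point `x` when there is no
duality gap. -/
theorem cut_stmt_9 {m n H : ℕ} (A : Matrix (Fin m) (Fin n) ℝ) (b : Fin m → ℝ)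
    (K : Set (Fin n → ℝ)) (hK : IsProperCone K)
    (mq : Fin H → ℕ) (D : ∀ h : Fin H, Matrix (Fin (mq h)) (Fin n) ℝ)
    (d : ∀ h : Fin H, Fin (mq h) → ℝ) (Q : ∀ h : Fin H, Set (Fin (mq h) → ℝ))
    (hQ : ∀ h, IsProperCone (Q h))
    (xbar : Fin n → ℝ) (hxbar : A.mulVec xbar = b)
    -- a norm N on ℝⁿ
    (N : (Fin n → ℝ) → ℝ)
    (hN0 : ∀ x, 0 ≤ N x) (hNeq : ∀ x, N x = 0 ↔ x = 0)
    (hNsmul : ∀ (a : ℝ) (x : Fin n → ℝ), N (a • x) = |a| * N x)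
    (hNadd : ∀ x y : Fin n → ℝ, N (x + y) ≤ N x + N y)
    -- CGCP-feasible tuple with ‖α‖_* ≤ 1
    (α : Fin n → ℝ) (β : ℝ) (u : Fin H → Fin m → ℝ)
    (lam : Fin H → Fin n → ℝ) (v : ∀ h : Fin H, Fin (mq h) → ℝ)
    (hfeas : CGCPFeasible A b K mq D d Q α β u lam v)
    (hα : sSup {t : ℝ | ∃ x : Fin n → ℝ, N x ≤ 1 ∧ t = α ⬝ᵥ x} ≤ 1)
    -- MCP-feasible point (x, y, z)
    (x : Fin n → ℝ) (y : Fin H → Fin n → ℝ) (z : Fin H → ℝ)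
    (hy : (∑ h, y h) = x) (hz : (∑ h, z h) = 1)
    (hAy : ∀ h, A.mulVec (y h) = z h • b)
    (hDy : ∀ h, (D h).mulVec (y h) - z h • d h ∈ Q h)
    (hyK : ∀ h, y h ∈ K) (hz0 : ∀ h, 0 ≤ z h)
    -- zero duality gap
    (hgap : α ⬝ᵥ xbar - β = -(N (xbar - x))) :
    α ⬝ᵥ x = β := by
  exact cut_stmt_9_general (Seminorm.of N hNadd hNsmul)
    (apply_le_of_dualNorm_le_one (f := dotProductBilin ℝ ℝ α) (fun w ↦ (hNeq w).1) hα)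
    hfeas.linearCGCPFeasible ⟨hy, hz, hAy, hDy, hyK, hz0⟩ hgap
end

section
/- (Strong feasibility of the trivial-normalization membership problem.) Let σ_h ∈ int Q_h for each h and let x̄ ∈ ℝⁿ satisfy Ax̄ = b. Then there exists a solution (y, z, η) of the system Σ_h y_h = x̄, Σ_h z_h = 1, A y_h = z_h b for all h, z_h ≥ 0 for all h, D_h y_h + ησ_h − z_h d_h ∈ Q_h for all h, η ≥ 0, with additionally y_h ∈ int K for all h, if and only if x̄ ∈ int K. -/
open Matrix

/-!
The interior of a convex cone is again a convex cone, so a nonempty sum of interior points `y_h` is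
an interior point. Conversely, an interior point `x̄` is split evenly as `y_h = x̄ / H`,
`z_h = 1 / H`, and the conic constraints then hold for every large `η`: since
`σ_h + η⁻¹ v → σ_h ∈ int Q_h` as `η → ∞`, the cone `Q_h` eventually contains
`η (σ_h + η⁻¹ v) = v + η σ_h`, whatever the vector `v`.
-/

open Filter Set Topology

/-- The topological interior of a convex cone, bundled as a convex cone so that it is closed under
nonempty sums. It is a `ConvexCone` and not a `PointedCone`, since `0` is usually not interior. -/
def interiorConvexCone {𝕜 E : Type*} [DivisionRing 𝕜] [PartialOrder 𝕜] [AddCommGroup E]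
    [Module 𝕜 E] [TopologicalSpace E] [ContinuousAdd E] [ContinuousConstSMul 𝕜 E]
    (K : ConvexCone 𝕜 E) : ConvexCone 𝕜 E where
  carrier := interior K
  smul_mem' _ hc := (isOpenMap_smul₀ hc.ne').mapsTo_interior fun _ ↦ K.smul_mem hc
  add_mem' _ hx _ hy :=
    interior_mono (add_subset_iff.2 fun _ hx _ hy ↦ K.add_mem hx hy)
      (subset_interior_add (add_mem_add hx hy))

section OrderedField

variable {𝕜 E ι : Type*} [Field 𝕜] [LinearOrder 𝕜] [IsStrictOrderedRing 𝕜]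
  [TopologicalSpace 𝕜] [OrderTopology 𝕜] [AddCommGroup E] [Module 𝕜 E] [TopologicalSpace E]

theorem eventually_add_smul_mem_of_mem_interior [ContinuousAdd E] [ContinuousSMul 𝕜 E] {s : Set E}
    (hs : ∀ c : 𝕜, 0 < c → ∀ x ∈ s, c • x ∈ s) {σ : E} (hσ : σ ∈ interior s) (v : E) :
    ∀ᶠ t : 𝕜 in atTop, v + t • σ ∈ s := by
  have tendsto_σ : Tendsto (fun t : 𝕜 ↦ t⁻¹ • v + σ) atTop (𝓝 σ) := by
    simpa using ((tendsto_inv_atTop_zero (𝕜 := 𝕜)).smul_const v).add_const σ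
  filter_upwards [tendsto_σ (mem_interior_iff_mem_nhds.1 hσ), eventually_gt_atTop 0]
    with t ht ht_pos
  simpa [smul_inv_smul₀ ht_pos.ne'] using hs t ht_pos _ ht

theorem exists_nonneg_forall_add_smul_mem [Finite ι]
    {G : ι → Type*} [∀ i, AddCommGroup (G i)] [∀ i, Module 𝕜 (G i)] [∀ i, TopologicalSpace (G i)]
    [∀ i, ContinuousAdd (G i)] [∀ i, ContinuousSMul 𝕜 (G i)] {Q : ∀ i, Set (G i)}
    (hQ : ∀ i, ∀ c : 𝕜, 0 < c → ∀ x ∈ Q i, c • x ∈ Q i)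
    {σ : ∀ i, G i} (hσ : ∀ i, σ i ∈ interior (Q i)) (v : ∀ i, G i) :
    ∃ η : 𝕜, 0 ≤ η ∧ ∀ i, v i + η • σ i ∈ Q i :=
  ((eventually_ge_atTop 0).and <| eventually_all.2 fun i ↦
    eventually_add_smul_mem_of_mem_interior (hQ i) (hσ i) (v i)).exists

theorem cut_stmt_13_general [Fintype ι] [Nonempty ι] [ContinuousAdd E] [ContinuousConstSMul 𝕜 E]
    {F : Type*} [AddCommGroup F] [Module 𝕜 F]
    {G : ι → Type*} [∀ i, AddCommGroup (G i)] [∀ i, Module 𝕜 (G i)] [∀ i, TopologicalSpace (G i)]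
    [∀ i, ContinuousAdd (G i)] [∀ i, ContinuousSMul 𝕜 (G i)]
    (A : E →ₗ[𝕜] F) (b : F) (K : ConvexCone 𝕜 E) (D : ∀ i, E → G i) (d : ∀ i, G i)
    (Q : ∀ i, Set (G i)) (hQ : ∀ i, ∀ c : 𝕜, 0 < c → ∀ x ∈ Q i, c • x ∈ Q i)
    (σ : ∀ i, G i) (hσ : ∀ i, σ i ∈ interior (Q i)) (x : E) (hx : A x = b) :
    (∃ (y : ι → E) (z : ι → 𝕜) (η : 𝕜),
      ∑ i, y i = x ∧ ∑ i, z i = 1 ∧ (∀ i, A (y i) = z i • b) ∧ (∀ i, 0 ≤ z i) ∧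
      (∀ i, D i (y i) + η • σ i - z i • d i ∈ Q i) ∧ 0 ≤ η ∧ ∀ i, y i ∈ interior (K : Set E)) ↔
      x ∈ interior (K : Set E) := by
  constructor
  · rintro ⟨y, -, -, rfl, -, -, -, -, -, hy⟩
    exact Finset.sum_induction_nonempty y (· ∈ interiorConvexCone K)
      (fun _ _ ↦ add_mem) Finset.univ_nonempty fun i _ ↦ hy i
  · intro hxK
    set w : 𝕜 := (Fintype.card ι : 𝕜)⁻¹
    have w_pos : 0 < w := inv_pos.2 (Nat.cast_pos.2 Fintype.card_pos)
    have sum_w : ∑ _i : ι, w = 1 := by simp [w]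
    obtain ⟨η, η_nonneg, hη⟩ :=
      exists_nonneg_forall_add_smul_mem hQ hσ fun i ↦ D i (w • x) - w • d i
    refine ⟨fun _ ↦ w • x, fun _ ↦ w, η, ?_, sum_w, fun _ ↦ by rw [map_smul, hx],
      fun _ ↦ w_pos.le, fun i ↦ ?_, η_nonneg, fun _ ↦ (interiorConvexCone K).smul_mem w_pos hxK⟩
    · rw [← Finset.sum_smul, sum_w, one_smul]
    · rw [add_sub_right_comm]
      exact hη i

end OrderedField

namespace IsProperCone

variable {n : ℕ} {K : Set (Fin n → ℝ)}

theorem smul_mem_of_pos (hK : IsProperCone K) (c : ℝ) (hc : 0 < c) (x : Fin n → ℝ) (hx : x ∈ K) :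
    c • x ∈ K :=
  hK.2.2.1 x hx c hc.le

/-- A proper cone bundled as a `ConvexCone`, for applying results on convex cones to it. -/
def toConvexCone (hK : IsProperCone K) : ConvexCone ℝ (Fin n → ℝ) where
  carrier := K
  smul_mem' c hc x := hK.smul_mem_of_pos c hc x
  add_mem' x hx y hy := by
    have midpoint_mem : (2⁻¹ : ℝ) • x + (2⁻¹ : ℝ) • y ∈ K :=
      hK.2.1 hx hy (by norm_num) (by norm_num) (by norm_num)
    simpa using hK.smul_mem_of_pos 2 two_pos _ midpoint_mem

end IsProperCone

/-- The trivial-normalization membership problem is strongly feasible iff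
`x̄ ∈ int K`. -/
theorem cut_stmt_13 {m n H : ℕ} (hH : 0 < H)
    (A : Matrix (Fin m) (Fin n) ℝ) (b : Fin m → ℝ)
    (K : Set (Fin n → ℝ)) (hK : IsProperCone K)
    (mq : Fin H → ℕ) (D : ∀ h : Fin H, Matrix (Fin (mq h)) (Fin n) ℝ)
    (d : ∀ h : Fin H, Fin (mq h) → ℝ) (Q : ∀ h : Fin H, Set (Fin (mq h) → ℝ))
    (hQ : ∀ h, IsProperCone (Q h))
    (σ : ∀ h : Fin H, Fin (mq h) → ℝ) (hσ : ∀ h, σ h ∈ interior (Q h))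
    (xbar : Fin n → ℝ) (hxbar : A.mulVec xbar = b) :
    (∃ (y : Fin H → Fin n → ℝ) (z : Fin H → ℝ) (η : ℝ),
      (∑ h, y h) = xbar ∧ (∑ h, z h) = 1 ∧
      (∀ h, A.mulVec (y h) = z h • b) ∧
      (∀ h, 0 ≤ z h) ∧
      (∀ h, (D h).mulVec (y h) + η • σ h - z h • d h ∈ Q h) ∧
      0 ≤ η ∧ (∀ h, y h ∈ interior K)) ↔ xbar ∈ interior K := by
  have : Nonempty (Fin H) := Fin.pos_iff_nonempty.1 hH
  exact cut_stmt_13_general A.mulVecLin b hK.toConvexCone (fun h ↦ (D h).mulVec) d Q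
    (fun h ↦ (hQ h).smul_mem_of_pos) σ hσ xbar hxbar
end

section
/- (Strong feasibility of the uniform-normalization membership problem for split disjunctions.) Let ρ ∈ int K, let x̄ ∈ ℝⁿ satisfy Ax̄ = b, let π ∈ ℝⁿ, π₀ ∈ ℝ, and suppose the set {x ∈ ℝⁿ : Ax = b, x ∈ K, πᵀx ≤ π₀} ∪ {x ∈ ℝⁿ : Ax = b, x ∈ K, πᵀx ≥ π₀ + 1} is nonempty. Then the two-term system with disjunctive constraints (−πᵀy_1 ≥ −z_1 π₀) and (πᵀy_2 ≥ z_2 (π₀ + 1)), namely: y_1 + y_2 = x̄, z_1 + z_2 = 1, A y_1 = z_1 b, A y_2 = z_2 b, z_1, z_2 ≥ 0, πᵀy_1 ≤ z_1 π₀, πᵀy_2 ≥ z_2 (π₀ + 1), η ≥ 0, y_1 + ηρ ∈ K, y_2 + ηρ ∈ K, admits a solution, and moreover admits a solution with y_1 + ηρ ∈ int K and y_2 + ηρ ∈ int K. -/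
open Matrix

/-!
Let `A x = b`. The vectors `w` and `x - w`, with multipliers `1` and `0`, satisfy the linear
constraints of the membership problem for `f ≤ p ∨ q ≤ f` as soon as `A w = b`, `f w ≤ p` and
`f w ≤ f x`. If `u` is any solution of `A u = b` with `f u ≤ p`, then a minimizer of `f` on `{u, x}`
is such a `w`; the other half-space is symmetric under `f ↦ -f`. The two vectors need not lie in the
cone: as the cone is invariant under scaling, adding a large multiple of an interior point `ρ` moves
them both into its interior.
-/

open Filter

section Interior

variable {𝕜 E : Type*} [Semifield 𝕜] [LinearOrder 𝕜] [IsStrictOrderedRing 𝕜] [TopologicalSpace 𝕜]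
  [OrderTopology 𝕜] [AddCommMonoid E] [Module 𝕜 E] [TopologicalSpace E] [ContinuousAdd E]
  [ContinuousSMul 𝕜 E]

theorem eventually_add_smul_mem_interior {K : Set E} (hK : ∀ x ∈ K, ∀ t : 𝕜, 0 < t → t • x ∈ K)
    {ρ : E} (hρ : ρ ∈ interior K) (y : E) : ∀ᶠ η : 𝕜 in atTop, y + η • ρ ∈ interior K := by
  have lim : Tendsto (fun η : 𝕜 ↦ η⁻¹ • y + ρ) atTop (nhds ρ) := by
    simpa only [zero_smul, zero_add] using
      ((tendsto_inv_atTop_zero (𝕜 := 𝕜)).smul_const y).add_const ρ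
  filter_upwards [lim.eventually (isOpen_interior.mem_nhds hρ), eventually_gt_atTop 0]
    with η hη η_pos
  have scaled : η • (η⁻¹ • y + ρ) ∈ interior K :=
    (isOpenMap_smul₀ η_pos.ne').mapsTo_interior (fun x hx ↦ hK x hx η η_pos) hη
  rwa [smul_add, smul_inv_smul₀ η_pos.ne'] at scaled

end Interior

/-- The membership problem with uniform normalization for the split disjunction
`f u ≤ p ∨ q ≤ f u` over `A u = b` is feasible at `x`, the normalized vectors `yᵢ + η • ρ` being
required to lie in `S`. Taking `S` to be the cone gives feasibility, taking its interior gives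
strong feasibility. -/
def SplitMembershipFeasible {𝕜 E F : Type*} [Ring 𝕜] [PartialOrder 𝕜] [AddCommGroup E]
    [Module 𝕜 E] [AddCommGroup F] [Module 𝕜 F] (A : E →ₗ[𝕜] F) (b : F) (f : E →ₗ[𝕜] 𝕜)
    (p q : 𝕜) (x ρ : E) (S : Set E) : Prop :=
  ∃ (y₁ y₂ : E) (z₁ z₂ η : 𝕜),
    y₁ + y₂ = x ∧ z₁ + z₂ = 1 ∧ A y₁ = z₁ • b ∧ A y₂ = z₂ • b ∧ 0 ≤ z₁ ∧ 0 ≤ z₂ ∧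
    f y₁ ≤ z₁ * p ∧ z₂ * q ≤ f y₂ ∧ 0 ≤ η ∧ y₁ + η • ρ ∈ S ∧ y₂ + η • ρ ∈ S

namespace SplitMembershipFeasible

section OrderedRing

variable {𝕜 E F : Type*} [Ring 𝕜] [PartialOrder 𝕜] [AddCommGroup E] [Module 𝕜 E] [AddCommGroup F]
  [Module 𝕜 F] {A : E →ₗ[𝕜] F} {b : F} {f : E →ₗ[𝕜] 𝕜} {p q : 𝕜} {x ρ : E} {S : Set E}

theorem mono {T : Set E} (hST : S ⊆ T) (h : SplitMembershipFeasible A b f p q x ρ S) :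
    SplitMembershipFeasible A b f p q x ρ T := by
  obtain ⟨y₁, y₂, z₁, z₂, η, hy, hz, hA₁, hA₂, hz₁, hz₂, hp, hq, hη, hS₁, hS₂⟩ := h
  exact ⟨y₁, y₂, z₁, z₂, η, hy, hz, hA₁, hA₂, hz₁, hz₂, hp, hq, hη, hST hS₁, hST hS₂⟩

variable [IsOrderedRing 𝕜]

theorem of_neg (h : SplitMembershipFeasible A b (-f) (-q) (-p) x ρ S) :
    SplitMembershipFeasible A b f p q x ρ S := by
  obtain ⟨y₁, y₂, z₁, z₂, η, hy, hz, hA₁, hA₂, hz₁, hz₂, hq, hp, hη, hS₁, hS₂⟩ := h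
  refine ⟨y₂, y₁, z₂, z₁, η, add_comm y₁ y₂ ▸ hy, add_comm z₁ z₂ ▸ hz, hA₂, hA₁, hz₂, hz₁,
    ?_, ?_, hη, hS₂, hS₁⟩
  · simpa only [mul_neg, LinearMap.neg_apply, neg_le_neg_iff] using hp
  · simpa only [mul_neg, LinearMap.neg_apply, neg_le_neg_iff] using hq

theorem of_le {w : E} {η : 𝕜} (hx : A x = b) (hw : A w = b) (hwp : f w ≤ p) (hwx : f w ≤ f x)
    (hη : 0 ≤ η) (hS₁ : w + η • ρ ∈ S) (hS₂ : x - w + η • ρ ∈ S) :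
    SplitMembershipFeasible A b f p q x ρ S := by
  refine ⟨w, x - w, 1, 0, η, add_sub_cancel w x, add_zero 1, ?_, ?_, zero_le_one, le_rfl, ?_, ?_,
    hη, hS₁, hS₂⟩
  · rw [hw, one_smul]
  · rw [map_sub, hx, hw, sub_self, zero_smul]
  · rwa [one_mul]
  · rwa [zero_mul, map_sub, sub_nonneg]

end OrderedRing

section Cone

variable {𝕜 E F : Type*} [Field 𝕜] [LinearOrder 𝕜] [IsStrictOrderedRing 𝕜] [TopologicalSpace 𝕜]
  [OrderTopology 𝕜] [AddCommGroup E] [Module 𝕜 E] [TopologicalSpace E] [ContinuousAdd E]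
  [ContinuousSMul 𝕜 E] [AddCommGroup F] [Module 𝕜 F] {A : E →ₗ[𝕜] F} {b : F} {f : E →ₗ[𝕜] 𝕜}
  {p q : 𝕜} {x ρ : E} {K : Set E}

theorem interior_of_exists_le (hK : ∀ x ∈ K, ∀ t : 𝕜, 0 < t → t • x ∈ K) (hρ : ρ ∈ interior K)
    (hx : A x = b) (hp : ∃ u, A u = b ∧ f u ≤ p) :
    SplitMembershipFeasible A b f p q x ρ (interior K) := by
  obtain ⟨w, hw, hwp, hwx⟩ : ∃ w, A w = b ∧ f w ≤ p ∧ f w ≤ f x := by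
    obtain ⟨u, hu, hup⟩ := hp
    rcases le_total (f u) (f x) with hux | hxu
    · exact ⟨u, hu, hup, hux⟩
    · exact ⟨x, hx, hxu.trans hup, le_rfl⟩
  obtain ⟨η, hη, hint₁, hint₂⟩ := ((eventually_ge_atTop 0).and
    ((eventually_add_smul_mem_interior hK hρ w).and
      (eventually_add_smul_mem_interior hK hρ (x - w)))).exists
  exact of_le hx hw hwp hwx hη hint₁ hint₂

end Cone

end SplitMembershipFeasible

theorem cut_stmt_15_general {𝕜 E F : Type*} [Field 𝕜] [LinearOrder 𝕜] [IsStrictOrderedRing 𝕜]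
    [TopologicalSpace 𝕜] [OrderTopology 𝕜] [AddCommGroup E] [Module 𝕜 E] [TopologicalSpace E]
    [ContinuousAdd E] [ContinuousSMul 𝕜 E] [AddCommGroup F] [Module 𝕜 F]
    (A : E →ₗ[𝕜] F) (b : F) {K : Set E} (hK : ∀ x ∈ K, ∀ t : 𝕜, 0 < t → t • x ∈ K)
    {ρ : E} (hρ : ρ ∈ interior K) {x : E} (hx : A x = b) (f : E →ₗ[𝕜] 𝕜) (p q : 𝕜)
    (hne : ∃ u, A u = b ∧ (f u ≤ p ∨ q ≤ f u)) :
    SplitMembershipFeasible A b f p q x ρ (interior K) := by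
  obtain ⟨u, hu, hup | hqu⟩ := hne
  · exact .interior_of_exists_le hK hρ hx ⟨u, hu, hup⟩
  · exact .of_neg (.interior_of_exists_le hK hρ hx ⟨u, hu, neg_le_neg hqu⟩)

/-- Strong feasibility of the uniform-normalization membership problem for a
split disjunction, assuming the disjunctive set is nonempty. -/
theorem cut_stmt_15 {m n : ℕ}
    (A : Matrix (Fin m) (Fin n) ℝ) (b : Fin m → ℝ)
    (K : Set (Fin n → ℝ)) (hK : IsProperCone K)
    (ρ : Fin n → ℝ) (hρ : ρ ∈ interior K)
    (xbar : Fin n → ℝ) (hxbar : A.mulVec xbar = b)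
    (π : Fin n → ℝ) (π₀ : ℝ)
    (hne : ({x : Fin n → ℝ | A.mulVec x = b ∧ x ∈ K ∧ π ⬝ᵥ x ≤ π₀} ∪
        {x : Fin n → ℝ | A.mulVec x = b ∧ x ∈ K ∧ π₀ + 1 ≤ π ⬝ᵥ x}).Nonempty) :
    (∃ (y₁ y₂ : Fin n → ℝ) (z₁ z₂ η : ℝ),
      y₁ + y₂ = xbar ∧ z₁ + z₂ = 1 ∧
      A.mulVec y₁ = z₁ • b ∧ A.mulVec y₂ = z₂ • b ∧
      0 ≤ z₁ ∧ 0 ≤ z₂ ∧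
      π ⬝ᵥ y₁ ≤ z₁ * π₀ ∧ z₂ * (π₀ + 1) ≤ π ⬝ᵥ y₂ ∧
      0 ≤ η ∧ y₁ + η • ρ ∈ K ∧ y₂ + η • ρ ∈ K) ∧
    (∃ (y₁ y₂ : Fin n → ℝ) (z₁ z₂ η : ℝ),
      y₁ + y₂ = xbar ∧ z₁ + z₂ = 1 ∧
      A.mulVec y₁ = z₁ • b ∧ A.mulVec y₂ = z₂ • b ∧
      0 ≤ z₁ ∧ 0 ≤ z₂ ∧
      π ⬝ᵥ y₁ ≤ z₁ * π₀ ∧ z₂ * (π₀ + 1) ≤ π ⬝ᵥ y₂ ∧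
      0 ≤ η ∧ y₁ + η • ρ ∈ interior K ∧ y₂ + η • ρ ∈ interior K) := by
  have hsplit : ∃ u, A.mulVec u = b ∧ (π ⬝ᵥ u ≤ π₀ ∨ π₀ + 1 ≤ π ⬝ᵥ u) := by
    obtain ⟨u, ⟨hu, -, hπ⟩ | ⟨hu, -, hπ⟩⟩ := hne
    exacts [⟨u, hu, .inl hπ⟩, ⟨u, hu, .inr hπ⟩]
  have strong := cut_stmt_15_general A.mulVecLin b (fun x hx t ht ↦ hK.2.2.1 x hx t ht.le) hρ hxbar
    (dotProductBilin ℝ ℝ π) π₀ (π₀ + 1) hsplit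
  exact ⟨strong.mono interior_subset, strong⟩
end

section
/- Let K ⊆ ℝⁿ be a proper cone, ρ ∈ int K, x̄ ∈ ℝⁿ, and H ≥ 1 an integer. Let η̄ = min{η ≥ 0 : x̄ + ηρ ∈ K} (this minimum exists since ρ ∈ int K), and set ξ = x̄ + η̄ρ. Then the problem min{λᵀx̄ : λ ∈ K*, ρᵀλ ≤ 1/H} has optimal value −η̄/H, the minimum is attained, and every minimizer λ₀ satisfies the complementarity condition λ₀ᵀξ = 0. -/
open Matrix

/-!
Put `ξ = x + η • ρ` and `c = 1 / H`. Every `f ∈ K*` with `f ρ ≤ c` satisfies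
`0 ≤ f ξ ≤ f x + η * c`: the outer inequality bounds the objective below by `-(η * c)`, and equality
there squeezes `f ξ` to `0`.

If `η > 0`, minimality of `η` keeps `ξ` out of the interior of `K`, so Hahn–Banach provides a
nonzero functional minimized over `K` at `ξ`. Since `K` is a cone, its minimum is `0`, so it lies
in `K*` and vanishes at `ξ`; it is positive at the interior point `ρ`, and rescaling it to take the
value `c` there gives a minimizer. If `η = 0`, the zero functional is a minimizer.
-/

lemma map_add_smul_le {R E : Type*} [CommRing R] [PartialOrder R] [IsOrderedRing R]
    [AddCommGroup E] [Module R E] (f : Module.Dual R E) (x : E) {ρ : E} {η c : R}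
    (hη : 0 ≤ η) (hfρ : f ρ ≤ c) : f (x + η • ρ) ≤ f x + η * c := by
  rw [map_add, map_smul, smul_eq_mul]
  gcongr

lemma notMem_interior_of_isLeast {α X : Type*} [LinearOrder α] [TopologicalSpace α]
    [OrderTopology α] [DenselyOrdered α] [NoMinOrder α] [TopologicalSpace X] {γ : α → X}
    {s : Set X} {a b : α} (hb : IsLeast {t | a ≤ t ∧ γ t ∈ s} b) (hab : a < b)
    (hγ : ContinuousAt γ b) : γ b ∉ interior s := by
  intro hγb
  have hmem : {t | a ≤ t ∧ γ t ∈ s} ∈ nhds b :=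
    Filter.inter_mem (Ici_mem_nhds hab) (hγ (mem_interior_iff_mem_nhds.1 hγb))
  have hb_int : b ∈ interior (Set.Ici b) :=
    interior_mono hb.2 (mem_interior_iff_mem_nhds.2 hmem)
  rw [interior_Ici] at hb_int
  exact lt_irrefl b hb_int

lemma map_eq_zero_of_isMinOn_cone {R E : Type*} [CommRing R] [PartialOrder R] [IsOrderedRing R]
    [AddCommGroup E] [Module R E] {K : PointedCone R E} {f : Module.Dual R E} {x : E}
    (hx : x ∈ K) (hmin : IsMinOn f K x) : f x = 0 := by
  have hle_zero : f x ≤ f 0 := hmin K.zero_mem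
  have hle_double : f x ≤ f (x + x) := hmin (K.add_mem hx hx)
  rw [map_zero] at hle_zero
  rw [map_add, le_add_iff_nonneg_left] at hle_double
  exact hle_zero.antisymm hle_double

lemma exists_pointedCone_coe_eq {R E : Type*} [Field R] [LinearOrder R] [IsStrictOrderedRing R]
    [AddCommGroup E] [Module R E] {s : Set E} (hne : s.Nonempty) (hconv : Convex R s)
    (hsmul : ∀ x ∈ s, ∀ t : R, 0 ≤ t → t • x ∈ s) : ∃ K : PointedCone R E, (K : Set E) = s := by
  refine ⟨{ carrier := s, zero_mem' := ?_, add_mem' := ?_, smul_mem' := ?_ }, rfl⟩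
  · intro x y hx hy
    have hmid := hsmul _ (hconv.midpoint_mem hx hy) 2 zero_le_two
    rwa [two_smul, midpoint_add_self] at hmid
  · obtain ⟨x, hx⟩ := hne
    simpa only [zero_smul] using hsmul x hx 0 le_rfl
  · exact fun t x hx => hsmul x hx t t.2

/-- The dot product as a linear equivalence between `ι → 𝕜` and its topological dual: the
topological counterpart of `dotProductEquiv`, used to read `v` as the functional `x ↦ v ⬝ᵥ x`. -/
noncomputable def dotProductStrongDualEquiv (𝕜 ι : Type*) [NontriviallyNormedField 𝕜]
    [CompleteSpace 𝕜] [Fintype ι] [DecidableEq ι] : (ι → 𝕜) ≃ₗ[𝕜] StrongDual 𝕜 (ι → 𝕜) :=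
  (dotProductEquiv 𝕜 ι).trans LinearMap.toContinuousLinearMap

@[simp]
lemma dotProductStrongDualEquiv_apply {𝕜 ι : Type*} [NontriviallyNormedField 𝕜]
    [CompleteSpace 𝕜] [Fintype ι] [DecidableEq ι] (v x : ι → 𝕜) :
    dotProductStrongDualEquiv 𝕜 ι v x = v ⬝ᵥ x :=
  rfl

section TopologicalVectorSpace

variable {E : Type*} [AddCommGroup E] [Module ℝ E] [TopologicalSpace E]
  [IsTopologicalAddGroup E] [ContinuousSMul ℝ E]

lemma map_pos_of_mem_interior {s : Set E} {f : StrongDual ℝ E} (hf : f ≠ 0)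
    (hnonneg : ∀ y ∈ s, 0 ≤ f y) {ρ : E} (hρ : ρ ∈ interior s) : 0 < f ρ := by
  have hopen : IsOpen (f '' interior s) := f.isOpenMap_of_ne_zero hf _ isOpen_interior
  have hsub : f '' interior s ⊆ Set.Ici 0 := Set.image_subset_iff.2 fun y hy =>
    hnonneg y (interior_subset hy)
  have hfρ : f ρ ∈ interior (Set.Ici 0) := interior_maximal hsub hopen (Set.mem_image_of_mem f hρ)
  rwa [interior_Ici] at hfρ

lemma exists_mem_dual_ne_zero_map_eq_zero {K : PointedCone ℝ E}
    (hK : (interior (K : Set E)).Nonempty) {x : E} (hx : x ∈ K)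
    (hx_int : x ∉ interior (K : Set E)) :
    ∃ f ∈ PointedCone.dual (topDualPairing ℝ E).flip K, f ≠ 0 ∧ f x = 0 := by
  obtain ⟨g, hg, hgx⟩ := geometric_hahn_banach_of_nonempty_interior_point K.convex hx_int hK
  have hmin : IsMinOn (-g) K x := fun y hy => neg_le_neg (hgx y hy)
  have hzero : (-g) x = 0 := map_eq_zero_of_isMinOn_cone (f := (-g).toLinearMap) hx hmin
  exact ⟨-g, fun y hy => hzero.ge.trans (hmin hy), neg_ne_zero.2 hg, hzero⟩

lemma exists_mem_dual_map_eq_zero_and_map_eq {K : PointedCone ℝ E} {ρ x : E}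
    (hρ : ρ ∈ interior (K : Set E)) (hx : x ∈ K) (hx_int : x ∉ interior (K : Set E))
    {c : ℝ} (hc : 0 ≤ c) :
    ∃ f ∈ PointedCone.dual (topDualPairing ℝ E).flip K, f x = 0 ∧ f ρ = c := by
  obtain ⟨g, hgK, hg, hgx⟩ := exists_mem_dual_ne_zero_map_eq_zero ⟨ρ, hρ⟩ hx hx_int
  have hgρ : 0 < g ρ := map_pos_of_mem_interior hg hgK hρ
  refine ⟨(c / g ρ) • g, fun y hy => mul_nonneg (div_nonneg hc hgρ.le) (hgK hy), ?_, ?_⟩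
  · simp [hgx]
  · simp [hgρ.ne']

lemma exists_mem_dual_map_eq_neg_mul {K : PointedCone ℝ E} {ρ x : E}
    (hρ : ρ ∈ interior (K : Set E)) {c : ℝ} (hc : 0 ≤ c) {η : ℝ}
    (hη : IsLeast {t : ℝ | 0 ≤ t ∧ x + t • ρ ∈ K} η) :
    ∃ f ∈ PointedCone.dual (topDualPairing ℝ E).flip K, f ρ ≤ c ∧ f x = -(η * c) := by
  obtain ⟨hη0, hξ⟩ := hη.1
  obtain rfl | hη_pos := hη0.eq_or_lt
  · exact ⟨0, zero_mem _, by simpa using hc, by simp⟩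
  · have hξ_int : x + η • ρ ∉ interior (K : Set E) :=
      notMem_interior_of_isLeast (γ := fun t => x + t • ρ) hη hη_pos (by fun_prop)
    obtain ⟨f, hfK, hfξ, hfρ⟩ := exists_mem_dual_map_eq_zero_and_map_eq hρ hξ hξ_int hc
    rw [map_add, map_smul, smul_eq_mul, hfρ] at hfξ
    exact ⟨f, hfK, hfρ.le, eq_neg_of_add_eq_zero_left hfξ⟩

theorem cut_stmt_16_general (K : PointedCone ℝ E) {ρ : E} (hρ : ρ ∈ interior (K : Set E)) (x : E)
    {c : ℝ} (hc : 0 ≤ c) {η : ℝ} (hη : IsLeast {t : ℝ | 0 ≤ t ∧ x + t • ρ ∈ K} η) :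
    IsLeast {t : ℝ | ∃ f ∈ PointedCone.dual (topDualPairing ℝ E).flip K, f ρ ≤ c ∧ t = f x}
        (-(η * c)) ∧
    ∀ f ∈ PointedCone.dual (topDualPairing ℝ E).flip K, f ρ ≤ c → f x = -(η * c) →
      f (x + η • ρ) = 0 := by
  have hle (f : StrongDual ℝ E) (hfρ : f ρ ≤ c) : f (x + η • ρ) ≤ f x + η * c :=
    map_add_smul_le f.toLinearMap x hη.1.1 hfρ
  refine ⟨⟨?_, ?_⟩, ?_⟩
  · obtain ⟨f, hfK, hfρ, hfx⟩ := exists_mem_dual_map_eq_neg_mul hρ hc hη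
    exact ⟨f, hfK, hfρ, hfx.symm⟩
  · rintro _ ⟨f, hfK, hfρ, rfl⟩
    exact neg_le_iff_add_nonneg.2 ((hfK hη.1.2).trans (hle f hfρ))
  · intro f hfK hfρ hfx
    have hfξ := hle f hfρ
    rw [hfx, neg_add_cancel] at hfξ
    exact hfξ.antisymm (hfK hη.1.2)

end TopologicalVectorSpace

/-- The reduced problem `min {λᵀx̄ : λ ∈ K*, ρᵀλ ≤ 1/H}` has optimal value
`−η̄/H`, attained, and every minimizer `λ₀` satisfies `λ₀ᵀξ = 0` where
`ξ = x̄ + η̄ρ`. -/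
theorem cut_stmt_16 {n : ℕ} (K : Set (Fin n → ℝ)) (hK : IsProperCone K)
    (ρ : Fin n → ℝ) (hρ : ρ ∈ interior K) (xbar : Fin n → ℝ)
    (H : ℕ) (hH : 1 ≤ H) (etabar : ℝ)
    (hetabar : IsLeast {η : ℝ | 0 ≤ η ∧ xbar + η • ρ ∈ K} etabar) :
    IsLeast {t : ℝ | ∃ lam ∈ dualCone' K, ρ ⬝ᵥ lam ≤ 1 / (H : ℝ) ∧ t = lam ⬝ᵥ xbar}
        (-(etabar / (H : ℝ))) ∧
    ∀ lam₀ ∈ dualCone' K, ρ ⬝ᵥ lam₀ ≤ 1 / (H : ℝ) →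
      lam₀ ⬝ᵥ xbar = -(etabar / (H : ℝ)) →
      lam₀ ⬝ᵥ (xbar + etabar • ρ) = 0 := by
  obtain ⟨-, hconv, hsmul, -, hint⟩ := hK
  obtain ⟨K, rfl⟩ := exists_pointedCone_coe_eq (hint.mono interior_subset) hconv hsmul
  simpa [(dotProductStrongDualEquiv ℝ (Fin n)).surjective.exists,
    (dotProductStrongDualEquiv ℝ (Fin n)).surjective.forall, dualCone', dotProduct_comm ρ,
    div_eq_mul_inv] using cut_stmt_16_general K hρ xbar (c := 1 / (H : ℝ)) (by positivity) hetabar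
end

section
/- (Sufficient condition for optimality of a K* cut under the standard normalization.) Let ρ ∈ int K, σ_h ∈ int Q_h, x̄ ∈ ℝⁿ with Ax̄ = b, and η̄ ≥ 0. Suppose x̄ + η̄ρ ∈ K and D_h x̄ + η̄σ_h − d_h ∈ Q_h for every h = 1,…,H. Then (y_h, z_h) = (x̄/H, 1/H) for all h together with η = η̄/H is feasible for the standard-normalized membership system: Σ_h y_h = x̄, Σ_h z_h = 1, A y_h = z_h b, y_h + ηρ ∈ K, D_h y_h + ησ_h − z_h d_h ∈ Q_h, z_h ≥ 0, η ≥ 0. Consequently, every CGCP-feasible tuple (α, β, u, λ, v) satisfying the standard normalization Σ_h (ρᵀλ_h + σ_hᵀv_h) ≤ 1 has objective value αᵀx̄ − β ≥ −η̄/H; in particular, if λ̄ ∈ K* satisfies H·ρᵀλ̄ ≤ 1 and λ̄ᵀx̄ = −η̄/H, then the tuple with α = λ̄, β = 0, u_h = 0, λ_h = λ̄, v_h = 0 for all h is optimal for the standard-normalized CGCP. -/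
open Matrix

/-!
The membership system is the dual of the standard-normalized CGCP, so a membership-feasible
`(y, z, η)` bounds the CGCP objective from below by weak duality: pairing branch `h` of a
CGCP-feasible tuple with `(y_h, z_h)` gives `-η (ρᵀλ_h + σ_hᵀv_h) ≤ αᵀy_h - β z_h`, and these sum
to `-η ≤ αᵀx̄ - β`. Splitting `x̄` evenly over the `H` branches divides `η̄` by `H`, because the
cones are invariant under scaling by `1 / H`.
-/

section Branch

variable {R m n k : Type*} [Fintype m] [Fintype n] [Fintype k]

lemma transpose_mulVec_add_add_dotProduct [CommSemiring R] (A : Matrix m n R) (D : Matrix k n R)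
    (u : m → R) (l : n → R) (v : k → R) (y : n → R) :
    (Aᵀ *ᵥ u + l + Dᵀ *ᵥ v) ⬝ᵥ y = u ⬝ᵥ A *ᵥ y + l ⬝ᵥ y + v ⬝ᵥ D *ᵥ y := by
  rw [add_dotProduct, add_dotProduct, dotProduct_comm (Aᵀ *ᵥ u), dotProduct_comm (Dᵀ *ᵥ v),
    dotProduct_transpose_mulVec, dotProduct_transpose_mulVec]

lemma neg_mul_le_dotProduct_sub_mul_of_branch
    [CommRing R] [LinearOrder R] [IsStrictOrderedRing R]
    {A : Matrix m n R} {b : m → R} {D : Matrix k n R} {d σ : k → R} {ρ : n → R}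
    {u : m → R} {l : n → R} {v : k → R} {β : R} {y : n → R} {z η : R}
    (hβ : β ≤ b ⬝ᵥ u + d ⬝ᵥ v) (hz : 0 ≤ z) (hy : A *ᵥ y = z • b)
    (hl : 0 ≤ l ⬝ᵥ (y + η • ρ)) (hv : 0 ≤ v ⬝ᵥ (D *ᵥ y + η • σ - z • d)) :
    -η * (ρ ⬝ᵥ l + σ ⬝ᵥ v) ≤ (Aᵀ *ᵥ u + l + Dᵀ *ᵥ v) ⬝ᵥ y - β * z := by
  have hβz : β * z ≤ (b ⬝ᵥ u + d ⬝ᵥ v) * z := mul_le_mul_of_nonneg_right hβ hz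
  rw [transpose_mulVec_add_add_dotProduct, hy]
  simp only [dotProduct_add, dotProduct_sub, dotProduct_smul, smul_eq_mul] at hl hv ⊢
  rw [dotProduct_comm u b, dotProduct_comm ρ l, dotProduct_comm σ v]
  rw [dotProduct_comm d v] at hβz
  linarith

end Branch

section Membership

variable {𝕜 ι m n : Type*} {κ : ι → Type*} [Fintype ι] [Fintype n]

/-- The standard-normalized membership system for the point `x`, in the unknowns `y`, `z`, `η`;
the branches are indexed by `ι` and `κ h` indexes the rows of `D h`. -/
def MembershipFeasible [Ring 𝕜] [PartialOrder 𝕜]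
    (A : Matrix m n 𝕜) (b : m → 𝕜) (K : Set (n → 𝕜))
    (D : ∀ h, Matrix (κ h) n 𝕜) (d : ∀ h, κ h → 𝕜) (Q : ∀ h, Set (κ h → 𝕜))
    (ρ : n → 𝕜) (σ : ∀ h, κ h → 𝕜) (x : n → 𝕜)
    (y : ι → n → 𝕜) (z : ι → 𝕜) (η : 𝕜) : Prop :=
  ∑ h, y h = x ∧ ∑ h, z h = 1 ∧ (∀ h, A *ᵥ y h = z h • b) ∧ (∀ h, y h + η • ρ ∈ K) ∧
    (∀ h, D h *ᵥ y h + η • σ h - z h • d h ∈ Q h) ∧ (∀ h, 0 ≤ z h) ∧ 0 ≤ η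

theorem membershipFeasible_inv_card_smul [Nonempty ι]
    [Field 𝕜] [LinearOrder 𝕜] [IsStrictOrderedRing 𝕜]
    {A : Matrix m n 𝕜} {b : m → 𝕜} {K : Set (n → 𝕜)}
    {D : ∀ h, Matrix (κ h) n 𝕜} {d : ∀ h, κ h → 𝕜} {Q : ∀ h, Set (κ h → 𝕜)}
    {ρ : n → 𝕜} {σ : ∀ h, κ h → 𝕜} {x : n → 𝕜} {η : 𝕜}
    (hK : ∀ p ∈ K, ∀ t : 𝕜, 0 < t → t • p ∈ K)
    (hQ : ∀ h, ∀ p ∈ Q h, ∀ t : 𝕜, 0 < t → t • p ∈ Q h)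
    (hη : 0 ≤ η) (hAx : A *ᵥ x = b) (hxK : x + η • ρ ∈ K)
    (hxQ : ∀ h, D h *ᵥ x + η • σ h - d h ∈ Q h) :
    MembershipFeasible A b K D d Q ρ σ x (fun _ => (Fintype.card ι : 𝕜)⁻¹ • x)
      (fun _ => (Fintype.card ι : 𝕜)⁻¹) (η / Fintype.card ι) := by
  have hcard : (0 : 𝕜) < Fintype.card ι := Nat.cast_pos.mpr Fintype.card_pos
  have hsum : ∑ _h : ι, (Fintype.card ι : 𝕜)⁻¹ = 1 := by
    rw [Finset.sum_const, Finset.card_univ, nsmul_eq_mul, mul_inv_cancel₀ hcard.ne']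
  rw [div_eq_inv_mul]
  refine ⟨?_, hsum, fun _ => ?_, fun _ => ?_, fun h => ?_, fun _ => (inv_pos.mpr hcard).le,
    mul_nonneg (inv_pos.mpr hcard).le hη⟩
  · rw [← Finset.sum_smul, hsum, one_smul]
  · rw [mulVec_smul, hAx]
  · rw [mul_smul, ← smul_add]
    exact hK _ hxK _ (inv_pos.mpr hcard)
  · rw [mulVec_smul, mul_smul, ← smul_add, ← smul_sub]
    exact hQ h _ (hxQ h) _ (inv_pos.mpr hcard)

end Membership

section CGCP

variable {m n H : ℕ} {A : Matrix (Fin m) (Fin n) ℝ} {b : Fin m → ℝ} {K : Set (Fin n → ℝ)}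
  {mq : Fin H → ℕ} {D : ∀ h, Matrix (Fin (mq h)) (Fin n) ℝ} {d : ∀ h, Fin (mq h) → ℝ}
  {Q : ∀ h, Set (Fin (mq h) → ℝ)}

theorem CGCPFeasible.neg_le_of_membershipFeasible
    {α : Fin n → ℝ} {β : ℝ} {u : Fin H → Fin m → ℝ} {lam : Fin H → Fin n → ℝ}
    {v : ∀ h, Fin (mq h) → ℝ} {ρ : Fin n → ℝ} {σ : ∀ h, Fin (mq h) → ℝ}
    {x : Fin n → ℝ} {y : Fin H → Fin n → ℝ} {z : Fin H → ℝ} {η : ℝ}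
    (hfeas : CGCPFeasible A b K mq D d Q α β u lam v)
    (hnorm : ∑ h, (ρ ⬝ᵥ lam h + σ h ⬝ᵥ v h) ≤ 1)
    (hmem : MembershipFeasible A b K D d Q ρ σ x y z η) :
    -η ≤ α ⬝ᵥ x - β := by
  obtain ⟨hx, hz, hAy, hyK, hyQ, hz_nonneg, hη⟩ := hmem
  have hbranch (h : Fin H) : -η * (ρ ⬝ᵥ lam h + σ h ⬝ᵥ v h) ≤ α ⬝ᵥ y h - β * z h := by
    obtain ⟨hlam, hv, hα, hβ⟩ := hfeas h
    rw [hα]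
    exact neg_mul_le_dotProduct_sub_mul_of_branch hβ (hz_nonneg h) (hAy h)
      (hlam _ (hyK h)) (hv _ (hyQ h))
  calc -η = -η * 1 := (mul_one _).symm
    _ ≤ -η * ∑ h, (ρ ⬝ᵥ lam h + σ h ⬝ᵥ v h) :=
      mul_le_mul_of_nonpos_left hnorm (neg_nonpos.mpr hη)
    _ = ∑ h, -η * (ρ ⬝ᵥ lam h + σ h ⬝ᵥ v h) := Finset.mul_sum _ _ _
    _ ≤ ∑ h, (α ⬝ᵥ y h - β * z h) := Finset.sum_le_sum fun h _ => hbranch h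
    _ = α ⬝ᵥ x - β := by
      rw [Finset.sum_sub_distrib, ← dotProduct_sum, ← Finset.mul_sum, hx, hz, mul_one]

lemma cgcpFeasible_of_mem_dualCone {l : Fin n → ℝ} (hl : l ∈ dualCone' K) :
    CGCPFeasible A b K mq D d Q l 0 (fun _ => 0) (fun _ => l) (fun _ => 0) := fun h =>
  have zero_mem_dual : (0 : Fin (mq h) → ℝ) ∈ dualCone' (Q h) := fun p _ =>
    (zero_dotProduct p).ge
  ⟨hl, zero_mem_dual, by simp, by simp⟩

end CGCP

theorem cut_stmt_17_general {m n H : ℕ} (hH : 0 < H)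
    (A : Matrix (Fin m) (Fin n) ℝ) (b : Fin m → ℝ)
    (K : Set (Fin n → ℝ)) (hK : ∀ p ∈ K, ∀ t : ℝ, 0 < t → t • p ∈ K)
    (mq : Fin H → ℕ) (D : ∀ h : Fin H, Matrix (Fin (mq h)) (Fin n) ℝ)
    (d : ∀ h : Fin H, Fin (mq h) → ℝ) (Q : ∀ h : Fin H, Set (Fin (mq h) → ℝ))
    (hQ : ∀ h, ∀ p ∈ Q h, ∀ t : ℝ, 0 < t → t • p ∈ Q h)
    (ρ : Fin n → ℝ) (σ : ∀ h : Fin H, Fin (mq h) → ℝ)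
    (xbar : Fin n → ℝ) (hxbar : A *ᵥ xbar = b) (etabar : ℝ) (hetabar0 : 0 ≤ etabar)
    (hxi : xbar + etabar • ρ ∈ K) (hDbar : ∀ h, D h *ᵥ xbar + etabar • σ h - d h ∈ Q h) :
    MembershipFeasible A b K D d Q ρ σ xbar (fun _ => (H : ℝ)⁻¹ • xbar) (fun _ => (H : ℝ)⁻¹)
      (etabar / H) ∧
    (∀ (α : Fin n → ℝ) (β : ℝ) (u : Fin H → Fin m → ℝ)
        (lam : Fin H → Fin n → ℝ) (v : ∀ h : Fin H, Fin (mq h) → ℝ),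
        CGCPFeasible A b K mq D d Q α β u lam v →
        (∑ h, (ρ ⬝ᵥ lam h + σ h ⬝ᵥ v h)) ≤ 1 →
        -(etabar / (H : ℝ)) ≤ α ⬝ᵥ xbar - β) ∧
    (∀ lambar : Fin n → ℝ, lambar ∈ dualCone' K →
        (H : ℝ) * (ρ ⬝ᵥ lambar) ≤ 1 →
        lambar ⬝ᵥ xbar = -(etabar / (H : ℝ)) →
        CGCPFeasible A b K mq D d Q lambar 0 (fun _ => 0) (fun _ => lambar)
          (fun _ => 0) ∧
        (∑ h : Fin H, (ρ ⬝ᵥ lambar + σ h ⬝ᵥ (0 : Fin (mq h) → ℝ))) ≤ 1 ∧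
        (∀ (α : Fin n → ℝ) (β : ℝ) (u : Fin H → Fin m → ℝ)
            (lam : Fin H → Fin n → ℝ) (v : ∀ h : Fin H, Fin (mq h) → ℝ),
            CGCPFeasible A b K mq D d Q α β u lam v →
            (∑ h, (ρ ⬝ᵥ lam h + σ h ⬝ᵥ v h)) ≤ 1 →
            lambar ⬝ᵥ xbar - 0 ≤ α ⬝ᵥ xbar - β)) := by
  have : Nonempty (Fin H) := Fin.pos_iff_nonempty.mp hH
  have hmem : MembershipFeasible A b K D d Q ρ σ xbar (fun _ => (H : ℝ)⁻¹ • xbar)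
      (fun _ => (H : ℝ)⁻¹) (etabar / H) := by
    simpa only [Fintype.card_fin] using
      membershipFeasible_inv_card_smul hK hQ hetabar0 hxbar hxi hDbar
  refine ⟨hmem, fun _ _ _ _ _ hfeas hnorm => hfeas.neg_le_of_membershipFeasible hnorm hmem,
    fun lambar hlambar hnormbar hobj => ⟨cgcpFeasible_of_mem_dualCone hlambar, ?_, ?_⟩⟩
  · simpa using hnormbar
  · intro _ _ _ _ _ hfeas hnorm
    rw [sub_zero, hobj]
    exact hfeas.neg_le_of_membershipFeasible hnorm hmem

/-- Sufficient condition for optimality of a `K*` cut under the standard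
normalization: if `x̄ + η̄ρ ∈ K` and `D_h x̄ + η̄σ_h − d_h ∈ Q_h` for all `h`,
then `(x̄/H, 1/H, η̄/H)` is feasible for the standard-normalized membership
system; consequently every standard-normalized CGCP-feasible tuple has
objective value at least `−η̄/H`, and any `λ̄ ∈ K*` with `H·ρᵀλ̄ ≤ 1` and
`λ̄ᵀx̄ = −η̄/H` yields an optimal `K*` cut. -/
theorem cut_stmt_17 {m n H : ℕ} (hH : 0 < H)
    (A : Matrix (Fin m) (Fin n) ℝ) (b : Fin m → ℝ)
    (K : Set (Fin n → ℝ)) (hK : IsProperCone K)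
    (mq : Fin H → ℕ) (D : ∀ h : Fin H, Matrix (Fin (mq h)) (Fin n) ℝ)
    (d : ∀ h : Fin H, Fin (mq h) → ℝ) (Q : ∀ h : Fin H, Set (Fin (mq h) → ℝ))
    (hQ : ∀ h, IsProperCone (Q h))
    (ρ : Fin n → ℝ) (hρ : ρ ∈ interior K)
    (σ : ∀ h : Fin H, Fin (mq h) → ℝ) (hσ : ∀ h, σ h ∈ interior (Q h))
    (xbar : Fin n → ℝ) (hxbar : A.mulVec xbar = b)
    (etabar : ℝ) (hetabar0 : 0 ≤ etabar)
    (hxi : xbar + etabar • ρ ∈ K)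
    (hDbar : ∀ h, (D h).mulVec xbar + etabar • σ h - d h ∈ Q h) :
    -- (a) feasibility of (x̄/H, 1/H, η̄/H) for the membership system
    ((∑ _h : Fin H, (H : ℝ)⁻¹ • xbar) = xbar ∧
     (∑ _h : Fin H, (H : ℝ)⁻¹) = 1 ∧
     (∀ _h : Fin H, A.mulVec ((H : ℝ)⁻¹ • xbar) = (H : ℝ)⁻¹ • b) ∧
     (∀ _h : Fin H, (H : ℝ)⁻¹ • xbar + (etabar / (H : ℝ)) • ρ ∈ K) ∧
     (∀ h : Fin H, (D h).mulVec ((H : ℝ)⁻¹ • xbar) + (etabar / (H : ℝ)) • σ h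
        - (H : ℝ)⁻¹ • d h ∈ Q h) ∧
     (∀ _h : Fin H, (0 : ℝ) ≤ (H : ℝ)⁻¹) ∧ 0 ≤ etabar / (H : ℝ)) ∧
    -- (b) lower bound on the normalized CGCP objective
    (∀ (α : Fin n → ℝ) (β : ℝ) (u : Fin H → Fin m → ℝ)
        (lam : Fin H → Fin n → ℝ) (v : ∀ h : Fin H, Fin (mq h) → ℝ),
        CGCPFeasible A b K mq D d Q α β u lam v →
        (∑ h, (ρ ⬝ᵥ lam h + σ h ⬝ᵥ v h)) ≤ 1 →
        -(etabar / (H : ℝ)) ≤ α ⬝ᵥ xbar - β) ∧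
    -- (c) optimality of the K* cut
    (∀ lambar : Fin n → ℝ, lambar ∈ dualCone' K →
        (H : ℝ) * (ρ ⬝ᵥ lambar) ≤ 1 →
        lambar ⬝ᵥ xbar = -(etabar / (H : ℝ)) →
        CGCPFeasible A b K mq D d Q lambar 0 (fun _ => 0) (fun _ => lambar)
          (fun _ => 0) ∧
        (∑ h : Fin H, (ρ ⬝ᵥ lambar + σ h ⬝ᵥ (0 : Fin (mq h) → ℝ))) ≤ 1 ∧
        (∀ (α : Fin n → ℝ) (β : ℝ) (u : Fin H → Fin m → ℝ)
            (lam : Fin H → Fin n → ℝ) (v : ∀ h : Fin H, Fin (mq h) → ℝ),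
            CGCPFeasible A b K mq D d Q α β u lam v →
            (∑ h, (ρ ⬝ᵥ lam h + σ h ⬝ᵥ v h)) ≤ 1 →
            lambar ⬝ᵥ xbar - 0 ≤ α ⬝ᵥ xbar - β)) :=
  cut_stmt_17_general hH A b K (fun p hp t ht => hK.2.2.1 p hp t ht.le) mq D d Q
    (fun h p hp t ht => (hQ h).2.2.1 p hp t ht.le) ρ σ xbar hxbar etabar hetabar0 hxi hDbar
end

section
/- (Monoidal-type cut strengthening for split cuts.) Split the variables as x = (x₁, x₂) ∈ ℝ^{n₁} × ℝ^{n₂} with K = K₁ × K₂, A = [A₁ A₂], and π = (π₁, π₂). Suppose (α, β, u₁, u₂, λ₁, λ₂, v₁, v₂) satisfies: α = Aᵀu₁ + λ₁ − v₁π, α = Aᵀu₂ + λ₂ + v₂π, β ≤ bᵀu₁ − v₁π₀, β ≤ bᵀu₂ + v₂(π₀ + 1), with λ₁, λ₂ ∈ K* and v₁, v₂ ≥ 0. Let δπ ∈ ℤ^{n₂} and α̃₂ ∈ ℝ^{n₂} satisfy α̃₂ − A₂ᵀu₁ + v₁(π₂ + δπ) ∈ K₂* and α̃₂ − A₂ᵀu₂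 − v₂(π₂ + δπ) ∈ K₂*. Then, with α̃ = (α₁, α̃₂) and π̃ = (π₁, π₂ + δπ), the inequality α̃ᵀx ≥ β holds for every x in the disjunctive set D̃ = {x : Ax = b, x ∈ K, π̃ᵀx ≤ π₀} ∪ {x : Ax = b, x ∈ K, π̃ᵀx ≥ π₀ + 1}. -/
/-!
Write `λ = α - Aᵀu + vπ`. For a point with `Ax = b` one has `αᵀx = λᵀx + bᵀu - v(πᵀx)`, so
`λ ∈ K*`, `v ≥ 0` and `πᵀx ≤ π₀` give `αᵀx ≥ bᵀu - vπ₀`. The other side of the split is the same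
statement for `-π` and `-(π₀ + 1)`. The conditions on `α̃₂` are precisely the second blocks of the
two memberships `λ ∈ K*` for `(α̃, π̃)`, while the first blocks are those of `(α, π)`; hence the old
multipliers certify the new inequality.
-/

open Matrix

theorem sumElim_sub_transpose_fromCols_mulVec_add_smul {R m n₁ n₂ : Type*}
    [CommRing R] [Fintype m] (A₁ : Matrix m n₁ R) (A₂ : Matrix m n₂ R) (u : m → R) (v : R)
    (α₁ π₁ : n₁ → R) (α₂ π₂ : n₂ → R) :
    Sum.elim α₁ α₂ - (fromCols A₁ A₂)ᵀ *ᵥ u + v • Sum.elim π₁ π₂ =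
      Sum.elim (α₁ - A₁ᵀ *ᵥ u + v • π₁) (α₂ - A₂ᵀ *ᵥ u + v • π₂) := by
  rw [transpose_fromCols, fromRows_mulVec]
  ext (i | i) <;> rfl

section Split

variable {R m n n₁ n₂ : Type*} [CommRing R] [PartialOrder R] [IsOrderedRing R]
variable [Fintype m] [Fintype n] [Fintype n₁] [Fintype n₂]

/-- The disjunctive set of the split `πᵀx ≤ π₀ ∨ πᵀx ≥ π₀ + 1` over
`{x | Ax = b, x ∈ K}`: the set `D̃` of the paper when `π = π̃`. -/
def splitDisjunctiveSet (A : Matrix m n R) (b : m → R) (K : Set (n → R)) (π : n → R) (π₀ : R) :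
    Set (n → R) :=
  {x | A *ᵥ x = b ∧ x ∈ K ∧ (π ⬝ᵥ x ≤ π₀ ∨ π₀ + 1 ≤ π ⬝ᵥ x)}

theorem le_dotProduct_of_mem_dual {A : Matrix m n R} {b u : m → R} {K : Set (n → R)}
    {π α x : n → R} {π₀ v β : R} (hv : 0 ≤ v)
    (hα : α - Aᵀ *ᵥ u + v • π ∈ PointedCone.dual (dotProductBilin R R) K)
    (hβ : β ≤ b ⬝ᵥ u - v * π₀) (hAx : A *ᵥ x = b) (hx : x ∈ K) (hπ : π ⬝ᵥ x ≤ π₀) :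
    β ≤ α ⬝ᵥ x := by
  have hdual : 0 ≤ (α - Aᵀ *ᵥ u + v • π) ⬝ᵥ x := by
    simpa only [dotProductBilin_apply_apply, dotProduct_comm x] using hα hx
  have hb : b ⬝ᵥ u = (Aᵀ *ᵥ u) ⬝ᵥ x := by
    rw [← hAx, dotProduct_comm, dotProduct_mulVec, mulVec_transpose]
  calc
    β ≤ b ⬝ᵥ u - v * π₀ := hβ
    _ ≤ b ⬝ᵥ u - v * (π ⬝ᵥ x) := by gcongr
    _ ≤ (α - Aᵀ *ᵥ u + v • π) ⬝ᵥ x + (b ⬝ᵥ u - v * (π ⬝ᵥ x)) := le_add_of_nonneg_left hdual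
    _ = α ⬝ᵥ x := by
      rw [hb, add_dotProduct, sub_dotProduct, smul_dotProduct, smul_eq_mul]
      ring

theorem splitDisjunctiveSet_subset_setOf_le_dotProduct {A : Matrix m n R} {b u₁ u₂ : m → R}
    {K : Set (n → R)} {π α : n → R} {π₀ v₁ v₂ β : R} (hv₁ : 0 ≤ v₁) (hv₂ : 0 ≤ v₂)
    (hα₁ : α - Aᵀ *ᵥ u₁ + v₁ • π ∈ PointedCone.dual (dotProductBilin R R) K)
    (hα₂ : α - Aᵀ *ᵥ u₂ - v₂ • π ∈ PointedCone.dual (dotProductBilin R R) K)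
    (hβ₁ : β ≤ b ⬝ᵥ u₁ - v₁ * π₀) (hβ₂ : β ≤ b ⬝ᵥ u₂ + v₂ * (π₀ + 1)) :
    splitDisjunctiveSet A b K π π₀ ⊆ {x | β ≤ α ⬝ᵥ x} := by
  rintro x ⟨hAx, hx, hle | hge⟩
  · exact le_dotProduct_of_mem_dual hv₁ hα₁ hβ₁ hAx hx hle
  · have hneg : -π ⬝ᵥ x ≤ -(π₀ + 1) := by rwa [neg_dotProduct, neg_le_neg_iff]
    refine le_dotProduct_of_mem_dual (u := u₂) hv₂ ?_ ?_ hAx hx hneg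
    · rwa [smul_neg, ← sub_eq_add_neg]
    · rwa [mul_neg, sub_neg_eq_add]

theorem sumElim_mem_dual_image2 {K₁ : Set (n₁ → R)} {K₂ : Set (n₂ → R)}
    {y₁ : n₁ → R} {y₂ : n₂ → R}
    (hy₁ : y₁ ∈ PointedCone.dual (dotProductBilin R R) K₁)
    (hy₂ : y₂ ∈ PointedCone.dual (dotProductBilin R R) K₂) :
    Sum.elim y₁ y₂ ∈ PointedCone.dual (dotProductBilin R R) (Set.image2 Sum.elim K₁ K₂) := by
  rintro _ ⟨x₁, hx₁, x₂, hx₂, rfl⟩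
  simpa only [dotProductBilin_apply_apply, sumElim_dotProduct_sumElim] using
    add_nonneg (hy₁ hx₁) (hy₂ hx₂)

theorem cut_stmt_19_general {A₁ : Matrix m n₁ R} {A₂ : Matrix m n₂ R} {b u₁ u₂ : m → R}
    {K₁ : Set (n₁ → R)} {K₂ : Set (n₂ → R)} {π₁ α₁ : n₁ → R} {π₂ α₂ : n₂ → R} {π₀ v₁ v₂ β : R}
    (hv₁ : 0 ≤ v₁) (hv₂ : 0 ≤ v₂)
    (hα₁₁ : α₁ - A₁ᵀ *ᵥ u₁ + v₁ • π₁ ∈ PointedCone.dual (dotProductBilin R R) K₁)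
    (hα₂₁ : α₁ - A₁ᵀ *ᵥ u₂ - v₂ • π₁ ∈ PointedCone.dual (dotProductBilin R R) K₁)
    (hβ₁ : β ≤ b ⬝ᵥ u₁ - v₁ * π₀) (hβ₂ : β ≤ b ⬝ᵥ u₂ + v₂ * (π₀ + 1))
    (hα₁₂ : α₂ - A₂ᵀ *ᵥ u₁ + v₁ • π₂ ∈ PointedCone.dual (dotProductBilin R R) K₂)
    (hα₂₂ : α₂ - A₂ᵀ *ᵥ u₂ - v₂ • π₂ ∈ PointedCone.dual (dotProductBilin R R) K₂)
    (x₁ : n₁ → R) (x₂ : n₂ → R) (hAx : A₁ *ᵥ x₁ + A₂ *ᵥ x₂ = b) (hx₁ : x₁ ∈ K₁) (hx₂ : x₂ ∈ K₂)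
    (hsplit : π₁ ⬝ᵥ x₁ + π₂ ⬝ᵥ x₂ ≤ π₀ ∨ π₀ + 1 ≤ π₁ ⬝ᵥ x₁ + π₂ ⬝ᵥ x₂) :
    β ≤ α₁ ⬝ᵥ x₁ + α₂ ⬝ᵥ x₂ := by
  have hx : Sum.elim x₁ x₂ ∈ splitDisjunctiveSet (fromCols A₁ A₂) b (Set.image2 Sum.elim K₁ K₂)
      (Sum.elim π₁ π₂) π₀ := by
    refine ⟨?_, Set.mem_image2_of_mem hx₁ hx₂, ?_⟩
    · rwa [fromCols_mulVec_sumElim]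
    · rwa [sumElim_dotProduct_sumElim]
  rw [← sumElim_dotProduct_sumElim]
  refine splitDisjunctiveSet_subset_setOf_le_dotProduct hv₁ hv₂ ?_ ?_ hβ₁ hβ₂ hx
  · rw [sumElim_sub_transpose_fromCols_mulVec_add_smul]
    exact sumElim_mem_dual_image2 hα₁₁ hα₁₂
  · rw [sub_eq_add_neg, ← neg_smul] at hα₂₁ hα₂₂ ⊢
    rw [sumElim_sub_transpose_fromCols_mulVec_add_smul]
    exact sumElim_mem_dual_image2 hα₂₁ hα₂₂

end Split

theorem dualCone'_eq_coe_dual {n : ℕ} (K : Set (Fin n → ℝ)) :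
    dualCone' K = PointedCone.dual (dotProductBilin ℝ ℝ) K := by
  ext u
  simp only [dualCone', Set.mem_ofPred_eq, SetLike.mem_coe, PointedCone.mem_dual,
    dotProductBilin_apply_apply, dotProduct_comm u]

/-- Monoidal-type strengthening for split cuts: given Farkas certificates for
the split disjunction `(πᵀx ≤ π₀) ∨ (πᵀx ≥ π₀ + 1)`, and `δπ ∈ ℤ^{n₂}`,
`α̃₂` as below, the strengthened inequality `α̃ᵀx ≥ β` is valid for the
disjunctive set associated with `π̃ = (π₁, π₂ + δπ)`. -/
theorem cut_stmt_19 {m n₁ n₂ : ℕ}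
    (A₁ : Matrix (Fin m) (Fin n₁) ℝ) (A₂ : Matrix (Fin m) (Fin n₂) ℝ)
    (b : Fin m → ℝ)
    (K₁ : Set (Fin n₁ → ℝ)) (K₂ : Set (Fin n₂ → ℝ))
    (hK₁ : IsProperCone K₁) (hK₂ : IsProperCone K₂)
    (π₁ : Fin n₁ → ℝ) (π₂ : Fin n₂ → ℝ) (π₀ : ℝ)
    (α₁ : Fin n₁ → ℝ) (α₂ : Fin n₂ → ℝ) (β : ℝ)
    (u₁ u₂ : Fin m → ℝ)
    (lam₁₁ lam₂₁ : Fin n₁ → ℝ) (lam₁₂ lam₂₂ : Fin n₂ → ℝ)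
    (v₁ v₂ : ℝ)
    (hlam₁ : lam₁₁ ∈ dualCone' K₁ ∧ lam₁₂ ∈ dualCone' K₂)
    (hlam₂ : lam₂₁ ∈ dualCone' K₁ ∧ lam₂₂ ∈ dualCone' K₂)
    (hv₁ : 0 ≤ v₁) (hv₂ : 0 ≤ v₂)
    -- α = Aᵀu₁ + λ₁ − v₁π, componentwise
    (heq₁₁ : α₁ = A₁ᵀ.mulVec u₁ + lam₁₁ - v₁ • π₁)
    (heq₁₂ : α₂ = A₂ᵀ.mulVec u₁ + lam₁₂ - v₁ • π₂)
    -- α = Aᵀu₂ + λ₂ + v₂π, componentwise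
    (heq₂₁ : α₁ = A₁ᵀ.mulVec u₂ + lam₂₁ + v₂ • π₁)
    (heq₂₂ : α₂ = A₂ᵀ.mulVec u₂ + lam₂₂ + v₂ • π₂)
    (hβ₁ : β ≤ b ⬝ᵥ u₁ - v₁ * π₀)
    (hβ₂ : β ≤ b ⬝ᵥ u₂ + v₂ * (π₀ + 1))
    -- strengthened coefficients
    (δπ : Fin n₂ → ℤ) (αt₂ : Fin n₂ → ℝ)
    (hαt₁ : αt₂ - A₂ᵀ.mulVec u₁ + v₁ • (π₂ + fun i => (δπ i : ℝ)) ∈ dualCone' K₂)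
    (hαt₂ : αt₂ - A₂ᵀ.mulVec u₂ - v₂ • (π₂ + fun i => (δπ i : ℝ)) ∈ dualCone' K₂) :
    -- validity of α̃ᵀx ≥ β on the strengthened disjunctive set
    ∀ (x₁ : Fin n₁ → ℝ) (x₂ : Fin n₂ → ℝ),
      A₁.mulVec x₁ + A₂.mulVec x₂ = b → x₁ ∈ K₁ → x₂ ∈ K₂ →
      (π₁ ⬝ᵥ x₁ + (π₂ + fun i => (δπ i : ℝ)) ⬝ᵥ x₂ ≤ π₀ ∨
        π₀ + 1 ≤ π₁ ⬝ᵥ x₁ + (π₂ + fun i => (δπ i : ℝ)) ⬝ᵥ x₂) →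
      β ≤ α₁ ⬝ᵥ x₁ + αt₂ ⬝ᵥ x₂ := by
  have hα₁₁ : α₁ - A₁ᵀ *ᵥ u₁ + v₁ • π₁ = lam₁₁ := by rw [heq₁₁]; abel
  have hα₂₁ : α₁ - A₁ᵀ *ᵥ u₂ - v₂ • π₁ = lam₂₁ := by rw [heq₂₁]; abel
  simp only [dualCone'_eq_coe_dual, ← hα₁₁, ← hα₂₁] at hlam₁ hlam₂ hαt₁ hαt₂
  exact cut_stmt_19_general hv₁ hv₂ hlam₁.1 hlam₂.1 hβ₁ hβ₂ hαt₁ hαt₂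
end
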